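/- Let k be a field of characteristic 0 and let A be a finite-dimensional cocommutative Hopf superalgebra over k. Then the cohomology ring H^•(A,k) = Ext^•_A(k,k) is a finitely generated k-algebra, and for every finite-dimensional ℤ/2-graded A-module M the cohomology H^•(A,M) = Ext^•_A(k,M) is a finitely generated module over H^•(A,k). -/

import Mathlib

open CategoryTheory TensorProduct

set_option synthInstance.maxHeartbeats 1000000
set_option maxHeartbeats 4000000

namespace Stmt1

section SuperHopf

variable (k : Type) [Field k] (A : Type) [Ring A] [Algebra k A]
variable (𝒜 : ZMod 2 → Submodule k A) [GradedAlgebra 𝒜]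

/-- the degree-`i` component of the `ℤ/2`-graded tensor product `A ⊗ A`:
the sum of the images of `𝒜 p ⊗ 𝒜 q` for `p + q = i` -/
noncomputable def tensorGrade (i : ZMod 2) : Submodule k (A ⊗[k] A) :=
  ⨆ (pq : ZMod 2 × ZMod 2) (_ : pq.1 + pq.2 = i),
    LinearMap.range (TensorProduct.map (𝒜 pq.1).subtype (𝒜 pq.2).subtype)

/-- the super-twist `τ(a ⊗ b) = (-1)^{|a|·|b|} b ⊗ a` on the `ℤ/2`-graded tensor square
of `A`, i.e. the braiding of the category of superspaces -/
noncomputable def superTwist : (𝒜 ᵍ⊗[k] 𝒜) ≃ₗ[k] (𝒜 ᵍ⊗[k] 𝒜) :=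
  (GradedTensorProduct.auxEquiv k 𝒜 𝒜).trans
    ((TensorProduct.gradedComm k (fun i => ↥(𝒜 i)) (fun i => ↥(𝒜 i))).trans
      (GradedTensorProduct.auxEquiv k 𝒜 𝒜).symm)

/-- the underlying linear map `A → A ⊗ A` of a comultiplication
`Δ : A → A ᵍ⊗ A` (recall that the graded tensor product is `A ⊗ A` as a vector space) -/
noncomputable def comulLin (comul : A →ₐ[k] (𝒜 ᵍ⊗[k] 𝒜)) : A →ₗ[k] A ⊗[k] A :=
  (GradedTensorProduct.of k 𝒜 𝒜).symm.toLinearMap ∘ₗ comul.toLinearMap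

/-- the data `(Δ, ε, χ)` makes the `ℤ/2`-graded algebra `A` into a cocommutative Hopf
superalgebra: `Δ : A → A ᵍ⊗ A` (an algebra homomorphism into the sign-twisted tensor
product) and `ε : A → k` are parity preserving, `Δ` is coassociative with counit `ε`, the
antipode `χ` is parity preserving and satisfies the antipode axiom, and `τ ∘ Δ = Δ` -/
structure IsHopfSuperalgebra (comul : A →ₐ[k] (𝒜 ᵍ⊗[k] 𝒜)) (counit : A →ₐ[k] k)
    (antipode : A →ₗ[k] A) : Prop where
  comul_parity : ∀ i : ZMod 2, ∀ a ∈ 𝒜 i, comulLin k A 𝒜 comul a ∈ tensorGrade k A 𝒜 i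
  counit_parity : ∀ a ∈ 𝒜 1, counit a = 0
  antipode_parity : ∀ i : ZMod 2, ∀ a ∈ 𝒜 i, antipode a ∈ 𝒜 i
  coassoc :
    TensorProduct.map (comulLin k A 𝒜 comul) LinearMap.id ∘ₗ comulLin k A 𝒜 comul =
      (TensorProduct.assoc k A A A).symm.toLinearMap ∘ₗ
        TensorProduct.map LinearMap.id (comulLin k A 𝒜 comul) ∘ₗ comulLin k A 𝒜 comul
  counit_left :
    (TensorProduct.lid k A).toLinearMap ∘ₗ
        TensorProduct.map counit.toLinearMap LinearMap.id ∘ₗ comulLin k A 𝒜 comul =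
      LinearMap.id
  counit_right :
    (TensorProduct.rid k A).toLinearMap ∘ₗ
        TensorProduct.map LinearMap.id counit.toLinearMap ∘ₗ comulLin k A 𝒜 comul =
      LinearMap.id
  antipode_left :
    LinearMap.mul' k A ∘ₗ TensorProduct.map antipode LinearMap.id ∘ₗ comulLin k A 𝒜 comul =
      Algebra.linearMap k A ∘ₗ counit.toLinearMap
  antipode_right :
    LinearMap.mul' k A ∘ₗ TensorProduct.map LinearMap.id antipode ∘ₗ comulLin k A 𝒜 comul =
      Algebra.linearMap k A ∘ₗ counit.toLinearMap
  cocomm : ∀ a : A, superTwist k A 𝒜 (comul a) = comul a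

/-- the trivial module `k`, on which `A` acts through the counit `ε`, as an object of the
category of (ungraded) `A`-modules -/
noncomputable def trivCat (counit : A →ₐ[k] k) : ModuleCat.{0} A :=
  letI : Module A k := Module.compHom k counit.toRingHom
  ModuleCat.of A k

end SuperHopf

section ExtMachinery

variable {k : Type} [Field k] {A : Type} [Ring A] [Algebra k A]

noncomputable instance : HasDerivedCategory.{1} (ModuleCat.{0} A) :=
  HasDerivedCategory.standard _

instance : HasExt.{1} (ModuleCat.{0} A) :=
  CategoryTheory.hasExt_of_hasDerivedCategory _

open Abelian in
lemma Ext_mk₀_add {X Y : ModuleCat.{0} A} (f g : X ⟶ Y) :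
    Ext.mk₀ (f + g) = Ext.mk₀ f + Ext.mk₀ g := by
  apply Ext.ext
  rw [Ext.add_hom, Ext.mk₀_hom, Ext.mk₀_hom, Ext.mk₀_hom, Functor.map_add]
  simp [ShiftedHom.mk₀, Preadditive.add_comp]

open Abelian in
/-- the `k`-vector space structure on the Ext-groups of `A`-modules, where `c • x` is the
Yoneda composite of `x` with `c • 𝟙` -/
noncomputable instance extModule (X Y : ModuleCat.{0} A) (N : ℕ) :
    Module k (Ext X Y N) where
  smul c x := (Ext.mk₀ (c • 𝟙 X)).comp x (zero_add N)
  one_smul x := by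
    show (Ext.mk₀ ((1 : k) • 𝟙 X)).comp x (zero_add N) = x
    rw [one_smul]
    exact Ext.mk₀_id_comp x
  mul_smul a b x := by
    show (Ext.mk₀ ((a * b) • 𝟙 X)).comp x (zero_add N) =
      (Ext.mk₀ (a • 𝟙 X)).comp ((Ext.mk₀ (b • 𝟙 X)).comp x (zero_add N)) (zero_add N)
    rw [Ext.mk₀_comp_mk₀_assoc (a • 𝟙 X) (b • 𝟙 X) x]
    congr 2
    simp [smul_smul, mul_comm a b]
  smul_zero a := Ext.comp_zero _ _ _ _ _
  smul_add a x y := Ext.comp_add _ _ _ _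
  add_smul a b x := by
    show (Ext.mk₀ ((a + b) • 𝟙 X)).comp x (zero_add N) =
      (Ext.mk₀ (a • 𝟙 X)).comp x (zero_add N) + (Ext.mk₀ (b • 𝟙 X)).comp x (zero_add N)
    rw [add_smul, Ext_mk₀_add, Ext.add_comp]
  zero_smul x := by
    show (Ext.mk₀ ((0 : k) • 𝟙 X)).comp x (zero_add N) = 0
    rw [zero_smul, Ext.mk₀_zero, Ext.zero_comp]

open Abelian in
/-- membership in the `k`-subalgebra of the cohomology ring
`H^•(A, k) = Ext^•_A(k, k)` generated by a family `S` of homogeneous elements, where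
multiplication is the Yoneda composition product -/
inductive ExtAlgGen (X : ModuleCat.{0} A) (S : ∀ N : ℕ, Set (Ext X X N)) :
    ∀ N : ℕ, Ext X X N → Prop
  | zero (N : ℕ) : ExtAlgGen X S N 0
  | of {N : ℕ} {x : Ext X X N} : x ∈ S N → ExtAlgGen X S N x
  | one : ExtAlgGen X S 0 (Ext.mk₀ (𝟙 X))
  | add {N : ℕ} {x y : Ext X X N} :
      ExtAlgGen X S N x → ExtAlgGen X S N y → ExtAlgGen X S N (x + y)
  | smul (c : k) {N : ℕ} {x : Ext X X N} : ExtAlgGen X S N x → ExtAlgGen X S N (c • x)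
  | mul {a b : ℕ} {x : Ext X X a} {y : Ext X X b} :
      ExtAlgGen X S a x → ExtAlgGen X S b y → ExtAlgGen X S (a + b) (x.comp y rfl)

open Abelian in
/-- membership in the `H^•(A,k)`-submodule of the cohomology `H^•(A, M) = Ext^•_A(k, M)`
generated by a family `S` of homogeneous elements, where `H^•(A,k)` acts by Yoneda
composition -/
inductive ExtModGen (X Y : ModuleCat.{0} A) (S : ∀ N : ℕ, Set (Ext X Y N)) :
    ∀ N : ℕ, Ext X Y N → Prop
  | zero (N : ℕ) : ExtModGen X Y S N 0
  | of {N : ℕ} {x : Ext X Y N} : x ∈ S N → ExtModGen X Y S N x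
  | add {N : ℕ} {x y : Ext X Y N} :
      ExtModGen X Y S N x → ExtModGen X Y S N y → ExtModGen X Y S N (x + y)
  | smul (c : k) {N : ℕ} {x : Ext X Y N} : ExtModGen X Y S N x → ExtModGen X Y S N (c • x)
  | act {a b : ℕ} (r : Ext X X a) {x : Ext X Y b} :
      ExtModGen X Y S b x → ExtModGen X Y S (a + b) (r.comp x rfl)

end ExtMachinery

/-!
Record the grading by the parity involution, so that all sign rules become identities in the
ordinary tensor square. In characteristic `0` a finite-dimensional `A` has no nonzero even
primitive elements, hence its odd primitive elements anticommute. Let `x₁, …, xₙ` be a basis of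
them.

The odd functionals act on `A` by contraction, with anticommuting operators. Filter `A` by the
number of contractions needed to annihilate an element; the bottom piece `F 1` behaves like an
ordinary cocommutative Hopf algebra. Dualising the `xⱼ` gives contractions `∂ⱼ` such that
`∑ xⱼ ∂ⱼ` is multiplication by `m` on `F (m + 1)` modulo `F m`. Since the integers are invertible,
these contractions provide an approximate homotopy, which makes the Koszul complex of the `xⱼ` an
exact resolution of `A ⧸ ∑ A xⱼ` by free modules.

The functional `f ↦ trace (a ↦ f a₂ • a₁)` is an element of `A`. Modulo `∑ A xⱼ` it is an integral
of nonzero counit, so `k` is a direct summand of `A ⧸ ∑ A xⱼ`. The cochains `Hom_A(-, M)` of the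
Koszul complex are the homogeneous polynomials in `n` variables with coefficients in `M`, and each
variable acts by the Yoneda product with a class of degree one. Hilbert's basis theorem therefore
makes the cohomology of `A ⧸ ∑ A xⱼ`, and hence that of its summand `k`, finitely generated.
-/

/-! ### Syzygies and Yoneda products -/

section Syzygies

open Abelian

universe w v u

variable {C : Type u} [Category.{v} C] [Abelian C]

variable (C) in
/-- A sequence of short exact sequences `0 → syzygy (n + 1) → cover n → syzygy n → 0` with
projective middle terms; splicing them gives a projective resolution of `syzygy 0`. -/
structure SyzygySequence where
  syzygy : ℕ → C
  cover : ℕ → C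
  ι : ∀ n, syzygy (n + 1) ⟶ cover n
  π : ∀ n, cover n ⟶ syzygy n
  ι_π : ∀ n, ι n ≫ π n = 0
  shortExact : ∀ n, (ShortComplex.mk (ι n) (π n) (ι_π n)).ShortExact
  projective_cover : ∀ n, Projective (cover n)

namespace SyzygySequence

/-- An endomorphism of degree `-1` of a syzygy sequence, compatible with the short exact
sequences. -/
structure Lowering (S : SyzygySequence C) where
  onSyzygy : ∀ n, S.syzygy (n + 1) ⟶ S.syzygy n
  onCover : ∀ n, S.cover (n + 1) ⟶ S.cover n
  onSyzygy_ι : ∀ n, onSyzygy (n + 1) ≫ S.ι n = S.ι (n + 1) ≫ onCover n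
  onCover_π : ∀ n, onCover n ≫ S.π n = S.π (n + 1) ≫ onSyzygy n

variable [HasExt.{w} C] (S : SyzygySequence C)

/-- The class in `Ext¹` of the `n`-th short exact sequence. -/
noncomputable def extClass (n : ℕ) : Ext (S.syzygy n) (S.syzygy (n + 1)) 1 :=
  (S.shortExact n).extClass

/-- The Yoneda product of the first `n` extension classes. -/
noncomputable def iteratedClass : ∀ n : ℕ, Ext (S.syzygy 0) (S.syzygy n) n
  | 0 => Ext.mk₀ (𝟙 (S.syzygy 0))
  | n + 1 => (iteratedClass n).comp (S.extClass n) rfl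

lemma exists_iteratedClass_comp {M : C} {n j m : ℕ} (h : n + j = m) (y : Ext (S.syzygy 0) M m) :
    ∃ z : Ext (S.syzygy n) M j, (S.iteratedClass n).comp z h = y := by
  induction n generalizing j with
  | zero =>
    obtain rfl : j = m := by omega
    exact ⟨y, Ext.mk₀_id_comp y⟩
  | succ n ih =>
    obtain ⟨z, rfl⟩ := ih (j := 1 + j) (by omega)
    have := S.projective_cover n
    have cover_acyclic : Subsingleton (Ext (S.cover n) M (1 + j)) := by
      rw [add_comm]; exact Ext.subsingleton_of_projective (S.cover n) M j
    obtain ⟨z', rfl⟩ := Ext.contravariant_sequence_exact₃ (S.shortExact n) M z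
      (Subsingleton.elim _ _) rfl
    exact ⟨z', Ext.comp_assoc _ _ _ rfl rfl (by omega)⟩

lemma exists_iteratedClass_comp_mk₀ {M : C} {n : ℕ} (y : Ext (S.syzygy 0) M n) :
    ∃ z : S.syzygy n ⟶ M, (S.iteratedClass n).comp (Ext.mk₀ z) (add_zero n) = y := by
  obtain ⟨w, rfl⟩ := S.exists_iteratedClass_comp (add_zero n) y
  obtain ⟨z, rfl⟩ := (Ext.mk₀_bijective _ _).2 w
  exact ⟨z, rfl⟩

namespace Lowering

variable {S} (T : S.Lowering)

/-- The degree-one self-extension of `syzygy 0` defined by a lowering operator. -/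
noncomputable def extClass : Ext (S.syzygy 0) (S.syzygy 0) 1 :=
  (S.extClass 0).comp (Ext.mk₀ (T.onSyzygy 0)) (add_zero 1)

lemma extClass_comp_onSyzygy (n : ℕ) :
    (S.extClass (n + 1)).comp (Ext.mk₀ (T.onSyzygy (n + 1))) (add_zero 1) =
      (Ext.mk₀ (T.onSyzygy n)).comp (S.extClass n) (zero_add 1) :=
  ShortComplex.ShortExact.extClass_naturality (S.shortExact (n + 1)) (S.shortExact n)
    { τ₁ := T.onSyzygy (n + 1)
      τ₂ := T.onCover n
      τ₃ := T.onSyzygy n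
      comm₁₂ := T.onSyzygy_ι n
      comm₂₃ := T.onCover_π n }

lemma iteratedClass_comp_onSyzygy (n : ℕ) :
    (S.iteratedClass (n + 1)).comp (Ext.mk₀ (T.onSyzygy n)) (add_zero _) =
      T.extClass.comp (S.iteratedClass n) (add_comm 1 n) := by
  induction n with
  | zero =>
    change ((Ext.mk₀ (𝟙 _)).comp (S.extClass 0) rfl).comp _ _ = T.extClass.comp (Ext.mk₀ (𝟙 _)) _
    rw [Ext.mk₀_id_comp, Ext.comp_mk₀_id, extClass]
  | succ n ih =>
    calc (S.iteratedClass (n + 1 + 1)).comp (Ext.mk₀ (T.onSyzygy (n + 1))) (add_zero _)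
      _ = (S.iteratedClass (n + 1)).comp
            ((S.extClass (n + 1)).comp (Ext.mk₀ (T.onSyzygy (n + 1))) (add_zero 1)) rfl :=
          Ext.comp_assoc _ _ _ _ _ (by omega)
      _ = ((S.iteratedClass (n + 1)).comp (Ext.mk₀ (T.onSyzygy n)) (add_zero _)).comp
            (S.extClass n) rfl := by
          rw [T.extClass_comp_onSyzygy n]
          exact (Ext.comp_assoc _ _ _ _ _ (by omega)).symm
      _ = T.extClass.comp (S.iteratedClass (n + 1)) (add_comm 1 (n + 1)) := by
          rw [ih]
          exact Ext.comp_assoc _ _ _ _ _ (by omega)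

lemma iteratedClass_comp_onSyzygy_comp {M : C} {n : ℕ} (z : S.syzygy n ⟶ M) :
    (S.iteratedClass (n + 1)).comp (Ext.mk₀ (T.onSyzygy n ≫ z)) (add_zero _) =
      T.extClass.comp ((S.iteratedClass n).comp (Ext.mk₀ z) (add_zero n)) (add_comm 1 n) := by
  rw [← Ext.mk₀_comp_mk₀, ← Ext.comp_assoc _ _ _ (add_zero _) (add_zero _) (by omega),
    T.iteratedClass_comp_onSyzygy]
  exact Ext.comp_assoc _ _ _ _ _ (by omega)

end Lowering

end SyzygySequence

section extSpan

/-- The classes of degree `n` in the left `Ext(X, X)`-span of the homogeneous classes `T`. -/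
noncomputable def extSpan [HasExt.{w} C] {X M : C}
    (T : Set (Σ n : ℕ, Ext X M n)) (n : ℕ) : AddSubgroup (Ext X M n) :=
  AddSubgroup.closure {e | ∃ t ∈ T, ∃ (a : ℕ) (r : Ext X X a) (h : a + t.1 = n), r.comp t.2 h = e}

variable [HasExt.{w} C] {X Y M : C} {T : Set (Σ n : ℕ, Ext X M n)}

lemma mem_extSpan {n : ℕ} {y : Ext X M n} (hy : ⟨n, y⟩ ∈ T) : y ∈ extSpan T n :=
  AddSubgroup.subset_closure ⟨_, hy, 0, Ext.mk₀ (𝟙 X), zero_add n, Ext.mk₀_id_comp y⟩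

/-- Precomposition of a homogeneous class with the morphism `p`. -/
noncomputable def precomp (p : Y ⟶ X) (t : Σ n : ℕ, Ext X M n) : Σ n : ℕ, Ext Y M n :=
  ⟨t.1, (Ext.mk₀ p).comp t.2 (zero_add t.1)⟩

lemma precomp_id : precomp (M := M) (𝟙 X) = id :=
  funext fun t => Sigma.ext rfl (heq_of_eq (Ext.mk₀_id_comp t.2))

lemma comp_mem_extSpan (p : Y ⟶ X) {a n m : ℕ} (h : a + n = m) (f : Ext X Y a) {e : Ext Y M n}
    (he : e ∈ extSpan (precomp p '' T) n) : f.comp e h ∈ extSpan T m := by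
  induction he using AddSubgroup.closure_induction with
  | mem e he =>
    obtain ⟨_, ⟨⟨d, t⟩, ht, rfl⟩, b, r, hn, rfl⟩ := he
    have hm : a + b + d = m := by rw [add_assoc, ← h, ← hn]; rfl
    refine AddSubgroup.subset_closure
      ⟨_, ht, a + b, f.comp (r.comp (Ext.mk₀ p) (add_zero b)) rfl, hm, ?_⟩
    calc (f.comp (r.comp (Ext.mk₀ p) (add_zero b)) rfl).comp t hm
      _ = f.comp ((r.comp (Ext.mk₀ p) (add_zero b)).comp t hn) h :=
          Ext.comp_assoc _ _ _ rfl hn hm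
      _ = f.comp (r.comp ((Ext.mk₀ p).comp t (zero_add d)) hn) h := by
          rw [Ext.comp_assoc _ _ _ (add_zero b) (zero_add d) (by rwa [add_zero])]
  | zero => rw [Ext.comp_zero]; exact zero_mem _
  | add x y _ _ hx hy => rw [Ext.comp_add]; exact add_mem hx hy
  | neg x _ hx => rw [Ext.comp_neg]; exact neg_mem hx

lemma extSpan_comp_mem {a n m : ℕ} (h : a + n = m) (r : Ext X X a) {e : Ext X M n}
    (he : e ∈ extSpan T n) : r.comp e h ∈ extSpan T m :=
  comp_mem_extSpan (𝟙 X) h r (by rwa [precomp_id, Set.image_id])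

end extSpan

end Syzygies

section ExactComplexes

universe v u

namespace SyzygySequence

variable {A : Type u} [Ring A] [Small.{v} A] {Q : ℕ → Type v} [∀ n, AddCommGroup (Q n)]
  [∀ n, Module A (Q n)] {d : ∀ n, Q (n + 1) →ₗ[A] Q n}

/-- The syzygies `coker (d n)` of an exact complex of projective modules. -/
noncomputable def ofExact (projective : ∀ n, Module.Projective A (Q n))
    (exact : ∀ n, Function.Exact (d (n + 1)) (d n)) : SyzygySequence (ModuleCat.{v} A) where
  syzygy n := ModuleCat.of A (Q n ⧸ LinearMap.range (d n))
  cover n := ModuleCat.of A (Q n)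
  ι n := ModuleCat.ofHom ((LinearMap.range (d (n + 1))).liftQ (d n)
    (LinearMap.range_le_ker_iff.2 (exact n).linearMap_comp_eq_zero))
  π n := ModuleCat.ofHom (LinearMap.range (d n)).mkQ
  ι_π n := by
    ext x
    simp
  shortExact n := by
    refine @ShortComplex.ShortExact.mk _ _ _ _ ?_ ?_ ?_
    · refine (ShortComplex.moduleCat_exact_iff _).2 fun x hx => ?_
      obtain ⟨y, hy⟩ : x ∈ LinearMap.range (d n) := by simpa using hx
      exact ⟨(LinearMap.range (d (n + 1))).mkQ y, by simpa using hy⟩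
    · refine (ModuleCat.mono_iff_injective _).2 (LinearMap.ker_eq_bot.1 ?_)
      exact Submodule.ker_liftQ_eq_bot _ _ _ fun x hx => (exact n x).1 hx
    · exact (ModuleCat.epi_iff_surjective _).2 (Submodule.mkQ_surjective _)
  projective_cover n := (IsProjective.iff_projective _).1 (projective n)

namespace Lowering

/-- The lowering operator on syzygies induced by a chain map of degree `-1`. -/
noncomputable def ofExact {projective : ∀ n, Module.Projective A (Q n)}
    {exact : ∀ n, Function.Exact (d (n + 1)) (d n)} (T : ∀ n, Q (n + 1) →ₗ[A] Q n)
    (comm : ∀ n z, d n (T (n + 1) z) = T n (d (n + 1) z)) :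
    (SyzygySequence.ofExact projective exact).Lowering where
  onSyzygy n := ModuleCat.ofHom (Submodule.mapQ _ _ (T n) (by
    rintro _ ⟨z, rfl⟩
    exact ⟨T (n + 1) z, comm n z⟩))
  onCover n := ModuleCat.ofHom (T n)
  onSyzygy_ι n := by
    ext x
    obtain ⟨x, rfl⟩ := Submodule.Quotient.mk_surjective _ x
    exact comm n x
  onCover_π _ := rfl

end Lowering

end SyzygySequence

end ExactComplexes

/-! ### The Koszul complex -/

section Koszul

lemma natCast_smul_comp_add_single_sub_single {ι R E : Type*} [DecidableEq ι] [Ring R]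
    [AddCommGroup E] [Module R E] (f : (ι →₀ ℕ) → E) (α : ι →₀ ℕ) (i j : ι) :
    ((α + Finsupp.single i 1 : ι →₀ ℕ) j : R) • f (α + Finsupp.single i 1 - Finsupp.single j 1) =
      (α j : R) • f (α - Finsupp.single j 1 + Finsupp.single i 1) + if i = j then f α else 0 := by
  rcases Nat.eq_zero_or_pos (α j) with hj | hj
  · rcases eq_or_ne i j with rfl | hij
    · simp [hj]
    · simp [hj, hij]
  · rw [tsub_add_eq_add_tsub (Finsupp.single_le_iff.2 hj)]
    rcases eq_or_ne i j with rfl | hij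
    · simp [add_smul]
    · simp [hij]

/-- Input of the Koszul complex: anticommuting elements `x i` of `A`, operators `contract i` and an
exhaustive filtration `F` such that, up to terms of lower filtration, `contract j` is the
contraction dual to right multiplication by `x j` and `a ↦ ∑ j, contract j a * x j` is
multiplication by `m` on `F (m + 1)`. -/
structure KoszulData (k A ι : Type*) [Field k] [Ring A] [Algebra k A] [Fintype ι]
    [DecidableEq ι] where
  x : ι → A
  x_mul_x_add : ∀ i j, x i * x j + x j * x i = 0
  contract : ι → A →ₗ[k] A
  F : ℕ → Submodule k A
  F_zero : F 0 = ⊥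
  exists_F_eq_top : ∃ m, F m = ⊤
  contract_mul_x : ∀ i j m, ∀ a ∈ F (m + 1),
    contract j (a * x i) + contract j a * x i - (if i = j then a else 0) ∈ F m
  euler : ∀ m, ∀ a ∈ F (m + 1), ∑ j, contract j a * x j - (m : k) • a ∈ F m

section HomogeneousPart

variable (A ι : Type*) [Ring A]

/-- The functions `(ι →₀ ℕ) → A` supported on exponents of total degree `N`. -/
def homogeneousPart (N : ℕ) : Submodule A ((ι →₀ ℕ) → A) where
  carrier := {z | ∀ α, α.degree ≠ N → z α = 0}
  add_mem' {z w} hz hw α h := by rw [Pi.add_apply, hz α h, hw α h, add_zero]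
  zero_mem' _ _ := rfl
  smul_mem' c z hz α h := by rw [Pi.smul_apply, hz α h, smul_zero]

/-- Coordinates on the homogeneous functions of degree `N`. -/
noncomputable def homogeneousPartEquiv (N : ℕ) :
    homogeneousPart A ι N ≃ₗ[A] ({α : ι →₀ ℕ // α.degree = N} → A) where
  toFun z α := z.1 α.1
  map_add' _ _ := rfl
  map_smul' _ _ := rfl
  invFun w := ⟨fun α => if h : α.degree = N then w ⟨α, h⟩ else 0, fun _ h => dif_neg h⟩
  left_inv z := by
    ext α
    by_cases h : α.degree = N
    · exact dif_pos h
    · rw [z.2 α h]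
      exact dif_neg h
  right_inv w := funext fun α => dif_pos α.2

instance finite_degree_eq [Finite ι] (N : ℕ) : Finite {α : ι →₀ ℕ // α.degree = N} :=
  ((Finsupp.finite_of_degree_le N).subset fun _ h => le_of_eq h).to_subtype

variable {ι}

/-- The operator `(shift i z) α = z (α + single i 1)`, dual to multiplication by a variable. -/
noncomputable def shift (i : ι) : ((ι →₀ ℕ) → A) →ₗ[A] ((ι →₀ ℕ) → A) :=
  LinearMap.funLeft A A (· + Finsupp.single i 1)

variable {A}

@[simp]
lemma shift_apply (i : ι) (z : (ι →₀ ℕ) → A) (α : ι →₀ ℕ) :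
    shift A i z α = z (α + Finsupp.single i 1) := rfl

lemma shift_mem_homogeneousPart (i : ι) {N : ℕ} {z : (ι →₀ ℕ) → A}
    (hz : z ∈ homogeneousPart A ι (N + 1)) : shift A i z ∈ homogeneousPart A ι N :=
  fun _ h => hz _ (by simpa using h)

lemma shift_eq_zero_of_mem_homogeneousPart_zero (i : ι) {z : (ι →₀ ℕ) → A}
    (hz : z ∈ homogeneousPart A ι 0) : shift A i z = 0 :=
  funext fun _ => hz _ (by simp)

end HomogeneousPart

namespace KoszulData

variable {k A ι : Type*} [Field k] [Ring A] [Algebra k A] [Fintype ι] [DecidableEq ι]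
variable (K : KoszulData k A ι)

/-- The Koszul differential on `A`-valued functions of exponents. -/
noncomputable def d : ((ι →₀ ℕ) → A) →ₗ[A] ((ι →₀ ℕ) → A) where
  toFun z α := ∑ i, z (α + Finsupp.single i 1) * K.x i
  map_add' z w := by ext α; simp [add_mul, Finset.sum_add_distrib]
  map_smul' c z := by ext α; simp [mul_assoc, Finset.mul_sum]

lemma d_apply (z : (ι →₀ ℕ) → A) (α : ι →₀ ℕ) :
    K.d z α = ∑ i, z (α + Finsupp.single i 1) * K.x i := rfl

/-- The operator dual to the exterior derivative; `d ∘ homotopy + homotopy ∘ d` is, up to lower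
filtration, multiplication by the total degree. -/
noncomputable def homotopy : ((ι →₀ ℕ) → A) →ₗ[k] ((ι →₀ ℕ) → A) where
  toFun z α := ∑ j, (α j : k) • K.contract j (z (α - Finsupp.single j 1))
  map_add' z w := by ext α; simp [Finset.sum_add_distrib]
  map_smul' c z := by ext α; simp [Finset.smul_sum, smul_comm c]

lemma homotopy_apply (z : (ι →₀ ℕ) → A) (α : ι →₀ ℕ) :
    K.homotopy z α = ∑ j, (α j : k) • K.contract j (z (α - Finsupp.single j 1)) := rfl

lemma d_shift (i : ι) (z : (ι →₀ ℕ) → A) : K.d (shift A i z) = shift A i (K.d z) := by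
  ext α
  simp [d_apply, add_right_comm]

lemma d_d [NeZero (2 : k)] (z : (ι →₀ ℕ) → A) : K.d (K.d z) = 0 := by
  ext α
  have expand : K.d (K.d z) α =
      ∑ i, ∑ j, z (α + Finsupp.single i 1 + Finsupp.single j 1) * (K.x j * K.x i) := by
    simp [d_apply, Finset.sum_mul, mul_assoc]
  have expand_swap : K.d (K.d z) α =
      ∑ i, ∑ j, z (α + Finsupp.single i 1 + Finsupp.single j 1) * (K.x i * K.x j) := by
    rw [expand, Finset.sum_comm]
    simp only [add_right_comm]
  refine (smul_eq_zero_iff_right (two_ne_zero' k)).1 ?_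
  rw [two_smul]
  nth_rw 1 [expand]
  simp only [expand_swap, ← Finset.sum_add_distrib, ← mul_add, K.x_mul_x_add, mul_zero,
    Finset.sum_const_zero]

lemma d_homotopy_add_homotopy_d_apply (z : (ι →₀ ℕ) → A) (α : ι →₀ ℕ) :
    K.d (K.homotopy z) α + K.homotopy (K.d z) α =
      ∑ j, ∑ i, (α j : k) •
        (K.contract j (z (α - Finsupp.single j 1 + Finsupp.single i 1) * K.x i) +
          K.contract j (z (α - Finsupp.single j 1 + Finsupp.single i 1)) * K.x i) +
      ∑ j, K.contract j (z α) * K.x j := by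
  have d_homotopy : K.d (K.homotopy z) α =
      ∑ j, ∑ i, (α j : k) •
        (K.contract j (z (α - Finsupp.single j 1 + Finsupp.single i 1)) * K.x i) +
      ∑ j, K.contract j (z α) * K.x j := by
    simp only [d_apply, homotopy_apply, Finset.sum_mul, smul_mul_assoc]
    rw [Finset.sum_comm, ← Finset.sum_add_distrib]
    refine Finset.sum_congr rfl fun j _ => ?_
    simp only [fun i => natCast_smul_comp_add_single_sub_single (R := k)
      (fun β => K.contract j (z β) * K.x i) α i j, Finset.sum_add_distrib,
      Finset.sum_ite_eq', Finset.mem_univ, if_true]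
  have homotopy_d : K.homotopy (K.d z) α =
      ∑ j, ∑ i, (α j : k) •
        K.contract j (z (α - Finsupp.single j 1 + Finsupp.single i 1) * K.x i) := by
    simp only [homotopy_apply, d_apply, map_sum, Finset.smul_sum]
  rw [d_homotopy, homotopy_d, add_right_comm]
  simp only [← Finset.sum_add_distrib, ← smul_add, add_comm]

lemma sum_natCast_smul_ite (z : (ι →₀ ℕ) → A) (α : ι →₀ ℕ) :
    ∑ j, ∑ i, (α j : k) •
      (if i = j then z (α - Finsupp.single j 1 + Finsupp.single i 1) else 0) =
    (α.degree : k) • z α := by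
  rw [Finsupp.degree_eq_sum, Nat.cast_sum, Finset.sum_smul]
  refine Finset.sum_congr rfl fun j _ => ?_
  rw [← Finset.smul_sum, Finset.sum_ite_eq' Finset.univ j, if_pos (Finset.mem_univ j)]
  rcases Nat.eq_zero_or_pos (α j) with hj | hj
  · simp [hj]
  · rw [tsub_add_cancel_of_le (Finsupp.single_le_iff.2 hj)]

lemma d_homotopy_add_homotopy_d_sub_mem {m : ℕ} {z : (ι →₀ ℕ) → A}
    (hz : ∀ α, z α ∈ K.F (m + 1)) (α : ι →₀ ℕ) :
    K.d (K.homotopy z) α + K.homotopy (K.d z) α - ((α.degree + m : ℕ) : k) • z α ∈ K.F m := by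
  have degree_part := Submodule.sum_mem (K.F m) fun j (_ : j ∈ Finset.univ) =>
    Submodule.sum_mem (K.F m) fun i (_ : i ∈ Finset.univ) =>
      Submodule.smul_mem _ (α j : k) (K.contract_mul_x i j m _
        (hz (α - Finsupp.single j 1 + Finsupp.single i 1)))
  simp only [smul_sub, Finset.sum_sub_distrib, sum_natCast_smul_ite] at degree_part
  convert Submodule.add_mem _ degree_part (K.euler m _ (hz α)) using 1
  rw [d_homotopy_add_homotopy_d_apply, Nat.cast_add, add_smul]
  abel

lemma d_mem_homogeneousPart {N : ℕ} {z : (ι →₀ ℕ) → A} (hz : z ∈ homogeneousPart A ι (N + 1)) :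
    K.d z ∈ homogeneousPart A ι N := by
  intro α h
  rw [d_apply]
  refine Finset.sum_eq_zero fun i _ => ?_
  rw [hz _ (by simpa using h), zero_mul]

lemma homotopy_mem_homogeneousPart {N : ℕ} {z : (ι →₀ ℕ) → A}
    (hz : z ∈ homogeneousPart A ι N) : K.homotopy z ∈ homogeneousPart A ι (N + 1) := by
  intro α h
  rw [homotopy_apply]
  refine Finset.sum_eq_zero fun i _ => ?_
  rcases Nat.eq_zero_or_pos (α i) with hi | hi
  · rw [hi, Nat.cast_zero, zero_smul]
  · rw [hz, map_zero, smul_zero]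
    intro h'
    have hα : α - Finsupp.single i 1 + Finsupp.single i 1 = α :=
      tsub_add_cancel_of_le (Finsupp.single_le_iff.2 hi)
    rw [← hα, map_add, h', Finsupp.degree_single] at h
    exact h rfl

variable [CharZero k]

lemma eq_zero_of_d_homotopy_add_homotopy_d {N : ℕ} {z : (ι →₀ ℕ) → A}
    (hz : z ∈ homogeneousPart A ι (N + 1))
    (h : K.d (K.homotopy z) + K.homotopy (K.d z) = 0) : z = 0 := by
  have descend (m : ℕ) (hm : ∀ α, z α ∈ K.F (m + 1)) (α : ι →₀ ℕ) : z α ∈ K.F m := by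
    by_cases hα : α.degree = N + 1
    · have hmem := K.d_homotopy_add_homotopy_d_sub_mem hm α
      rw [← Pi.add_apply, h, Pi.zero_apply, zero_sub, Submodule.neg_mem_iff] at hmem
      exact (Submodule.smul_mem_iff _ (Nat.cast_ne_zero.2 (by omega))).1 hmem
    · rw [hz α hα]
      exact zero_mem _
  obtain ⟨L, hL⟩ := K.exists_F_eq_top
  have mem_F (m : ℕ) : (∀ α, z α ∈ K.F m) → ∀ α, z α ∈ K.F 0 := by
    induction m with
    | zero => exact id
    | succ m ih => exact fun hm => ih (descend m hm)
  ext α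
  simpa [K.F_zero] using mem_F L (fun α => hL ▸ Submodule.mem_top) α

/-- On cycles `d ∘ homotopy` is injective, hence surjective by finite-dimensionality. -/
lemma exists_d_eq [FiniteDimensional k A] {N : ℕ} {z : (ι →₀ ℕ) → A}
    (hz : z ∈ homogeneousPart A ι (N + 1)) (hd : K.d z = 0) :
    ∃ w ∈ homogeneousPart A ι (N + 2), K.d w = z := by
  let cycles : Submodule k ((ι →₀ ℕ) → A) :=
    (homogeneousPart A ι (N + 1)).restrictScalars k ⊓ LinearMap.ker (K.d.restrictScalars k)
  let T : ((ι →₀ ℕ) → A) →ₗ[k] ((ι →₀ ℕ) → A) := K.d.restrictScalars k ∘ₗ K.homotopy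
  have hT : ∀ c ∈ cycles, T c ∈ cycles := fun c hc =>
    ⟨K.d_mem_homogeneousPart (K.homotopy_mem_homogeneousPart hc.1), K.d_d _⟩
  have finite_homogeneous : FiniteDimensional k
      ((homogeneousPart A ι (N + 1)).restrictScalars k) :=
    Module.Finite.equiv ((homogeneousPartEquiv A ι (N + 1)).restrictScalars k).symm
  have finite_cycles : FiniteDimensional k cycles :=
    Submodule.finiteDimensional_of_le (inf_le_left)
  have injective : Function.Injective (T.restrict hT) := by
    refine LinearMap.ker_eq_bot.1 (LinearMap.ker_eq_bot'.2 fun c hc => Subtype.ext ?_)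
    have hTc : K.d (K.homotopy c.1) = 0 := congrArg Subtype.val hc
    have hdc : K.d c.1 = 0 := c.2.2
    exact K.eq_zero_of_d_homotopy_add_homotopy_d c.2.1 (by rw [hTc, hdc, map_zero, add_zero])
  obtain ⟨c, hc⟩ := LinearMap.surjective_of_injective injective ⟨z, hz, hd⟩
  exact ⟨K.homotopy c.1, K.homotopy_mem_homogeneousPart c.2.1, congrArg Subtype.val hc⟩

/-- The Koszul differential in degree `N + 1`. -/
noncomputable def differential (N : ℕ) : homogeneousPart A ι (N + 1) →ₗ[A] homogeneousPart A ι N :=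
  K.d.restrict fun _ => K.d_mem_homogeneousPart

lemma exact_differential [FiniteDimensional k A] (N : ℕ) :
    Function.Exact (K.differential (N + 1)) (K.differential N) := by
  intro z
  constructor
  · intro hz
    obtain ⟨w, hw, hwz⟩ := K.exists_d_eq z.2 (congrArg Subtype.val hz)
    exact ⟨⟨w, hw⟩, Subtype.ext hwz⟩
  · rintro ⟨w, rfl⟩
    exact Subtype.ext (K.d_d w.1)

lemma F_le_F_one_sup_span (m : ℕ) :
    K.F m ≤ K.F 1 ⊔ (Submodule.span A (Set.range K.x)).restrictScalars k := by
  induction m with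
  | zero => exact K.F_zero ▸ bot_le
  | succ m ih =>
    intro a ha
    rcases m.eq_zero_or_pos with rfl | m_pos
    · exact Submodule.mem_sup_left ha
    have euler_mem : ∑ j, K.contract j a * K.x j ∈ Submodule.span A (Set.range K.x) :=
      sum_mem fun j _ => Submodule.smul_mem _ _ (Submodule.subset_span ⟨j, rfl⟩)
    have smul_mem : (m : k) • a ∈ K.F 1 ⊔ (Submodule.span A (Set.range K.x)).restrictScalars k := by
      rw [← sub_sub_cancel (∑ j, K.contract j a * K.x j) ((m : k) • a)]
      exact sub_mem (Submodule.mem_sup_right euler_mem) (ih (K.euler m a ha))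
    exact (Submodule.smul_mem_iff _ (Nat.cast_ne_zero.2 m_pos.ne')).1 smul_mem

end KoszulData

end Koszul

section Pairing

variable {k A ι M : Type*} [Field k] [Ring A] [Algebra k A] [AddCommGroup M] [Module A M]
  [Module k M] [IsScalarTower k A M]

noncomputable local instance : SMulCommClass A k M := IsScalarTower.to_smulCommClass'

variable (k A ι M) in
/-- The pairing of polynomials with coefficients in `M` with `A`-valued functions of exponents:
a monomial `m X ^ α` sends `w` to `w α • m`. -/
noncomputable def pairing :
    MvPolynomial ι k ⊗[k] M →ₗ[k] (((ι →₀ ℕ) → A) →ₗ[A] M) :=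
  TensorProduct.lift ((MvPolynomial.basisMonomials ι k).constr k fun α =>
    { toFun := fun m => LinearMap.toSpanSingleton A M m ∘ₗ LinearMap.proj α
      map_add' := fun m m' => by ext; simp
      map_smul' := fun c m => LinearMap.ext fun w => smul_comm (w α) c m })

lemma pairing_monomial_tmul (α : ι →₀ ℕ) (c : k) (m : M) (w : (ι →₀ ℕ) → A) :
    pairing k A ι M (MvPolynomial.monomial α c ⊗ₜ m) w = c • w α • m := by
  have monomial_eq : MvPolynomial.monomial α c = c • MvPolynomial.basisMonomials ι k α := by
    rw [MvPolynomial.coe_basisMonomials, MvPolynomial.smul_monomial, smul_eq_mul, mul_one]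
  rw [pairing, TensorProduct.lift.tmul, monomial_eq, map_smul, Module.Basis.constr_basis]
  rfl

lemma pairing_X_smul (i : ι) (v : MvPolynomial ι k ⊗[k] M) :
    pairing k A ι M ((MvPolynomial.X i : MvPolynomial ι k) • v) =
      pairing k A ι M v ∘ₗ shift A i := by
  induction v using TensorProduct.induction_on with
  | zero => rw [smul_zero, map_zero, LinearMap.zero_comp]
  | tmul f m =>
    induction f using MvPolynomial.induction_on' with
    | monomial α c =>
      ext w : 1
      rw [TensorProduct.smul_tmul', smul_eq_mul, MvPolynomial.X, MvPolynomial.monomial_mul, one_mul,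
        LinearMap.comp_apply, pairing_monomial_tmul, pairing_monomial_tmul, shift_apply, add_comm]
    | add f g hf hg => rw [TensorProduct.add_tmul, smul_add, map_add, map_add, hf, hg,
        LinearMap.add_comp]
  | add v v' hv hv' => rw [smul_add, map_add, map_add, hv, hv', LinearMap.add_comp]

lemma pairing_C_smul (c : k) (v : MvPolynomial ι k ⊗[k] M) :
    pairing k A ι M ((MvPolynomial.C c : MvPolynomial ι k) • v) = c • pairing k A ι M v := by
  rw [← MvPolynomial.algebraMap_eq, algebraMap_smul, map_smul]

lemma exists_pairing_eq [Finite ι] {N : ℕ} (z : homogeneousPart A ι N →ₗ[A] M) :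
    ∃ v, (∀ w : homogeneousPart A ι N, pairing k A ι M v w = z w) ∧
      ∀ N', N' ≠ N → ∀ w ∈ homogeneousPart A ι N', pairing k A ι M v w = 0 := by
  classical
  let e := homogeneousPartEquiv A ι N
  let _ := Fintype.ofFinite {α : ι →₀ ℕ // α.degree = N}
  have pairing_apply (w : (ι →₀ ℕ) → A) :
      pairing k A ι M (∑ α : {α : ι →₀ ℕ // α.degree = N},
        MvPolynomial.monomial α.1 1 ⊗ₜ z (e.symm fun β => if α = β then 1 else 0)) w =
      ∑ α : {α : ι →₀ ℕ // α.degree = N}, w α.1 • z (e.symm fun β => if α = β then 1 else 0) := by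
    rw [map_sum, LinearMap.sum_apply]
    exact Finset.sum_congr rfl fun α _ => by rw [pairing_monomial_tmul, one_smul]
  refine ⟨_, fun w => (pairing_apply w).trans ?_, fun N' hN w hw => (pairing_apply w).trans ?_⟩
  · exact (LinearMap.pi_apply_eq_sum_univ (z ∘ₗ e.symm.toLinearMap) (e w)).symm.trans
      (congrArg z (e.symm_apply_apply w))
  · exact Finset.sum_eq_zero fun α _ => by rw [hw α.1 (α.2.trans_ne hN.symm), zero_smul]

end Pairing

/-! ### Noetherianity of the cohomology of the Koszul complex -/

section Noetherian

open Abelian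

universe w u

lemma comp_mk₀_smul_id_comp {R : Type*} [Ring R] {C : Type*} [Category* C] [Abelian C]
    [Linear R C] [HasExt.{w} C] {X Y Z : C} {n : ℕ} (x : Ext X Y n) (r : R) (z : Y ⟶ Z) :
    x.comp (Ext.mk₀ ((r • 𝟙 Y) ≫ z)) (add_zero n) =
      (Ext.mk₀ (r • 𝟙 X)).comp (x.comp (Ext.mk₀ z) (add_zero n)) (zero_add n) := by
  rw [Linear.smul_comp, Category.id_comp, Ext.mk₀_smul, Ext.mk₀_smul, Ext.comp_smul, Ext.smul_comp,
    Ext.mk₀_id_comp]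

namespace KoszulData

variable {k : Type*} {A ι M : Type u} [Field k] [CharZero k] [Ring A] [Algebra k A]
  [FiniteDimensional k A] [Fintype ι] [DecidableEq ι] (K : KoszulData k A ι)

/-- The syzygies of the Koszul complex, a projective resolution of `A ⧸ span A (range x)`. -/
noncomputable def syzygies : SyzygySequence (ModuleCat.{u} A) :=
  .ofExact (Q := fun N => homogeneousPart A ι N) (d := K.differential)
    (fun N => Module.Projective.of_equiv (homogeneousPartEquiv A ι N).symm) K.exact_differential

/-- The action of the variable `i` on the Koszul complex. -/
noncomputable def lowering (i : ι) : K.syzygies.Lowering :=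
  .ofExact (fun _ => (shift A i).restrict fun _ => shift_mem_homogeneousPart i)
    fun _ z => Subtype.ext (K.d_shift i z.1)

variable [AddCommGroup M] [Module A M] [Module k M] [IsScalarTower k A M]

/-- The polynomial `v` represents the map `z` on the `N`-th syzygy through `pairing`. -/
def Represents {N : ℕ} (v : MvPolynomial ι k ⊗[k] M)
    (z : K.syzygies.syzygy N ⟶ ModuleCat.of A M) : Prop :=
  ∀ w : homogeneousPart A ι N, z.hom (Submodule.Quotient.mk w) = pairing k A ι M v w.1

namespace Represents

variable {K} {N : ℕ} {v v' : MvPolynomial ι k ⊗[k] M}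
  {z z' : K.syzygies.syzygy N ⟶ ModuleCat.of A M}

lemma unique (h : K.Represents v z) (h' : K.Represents v z') : z = z' := by
  ext x
  obtain ⟨x, rfl⟩ := Submodule.Quotient.mk_surjective _ x
  exact (h x).trans (h' x).symm

lemma add (h : K.Represents v z) (h' : K.Represents v' z') : K.Represents (v + v') (z + z') :=
  fun w => by
    rw [map_add, LinearMap.add_apply, ← h w, ← h' w]
    rfl

lemma C_smul (c : k) (h : K.Represents v z) :
    K.Represents ((MvPolynomial.C c : MvPolynomial ι k) • v)
      ((c • 𝟙 (K.syzygies.syzygy N)) ≫ z) :=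
  fun w => by
    rw [pairing_C_smul, LinearMap.smul_apply, ← h w]
    exact (z.hom.map_smul (algebraMap k A c) (Submodule.Quotient.mk w)).trans
      (algebraMap_smul A c (_ : M))

lemma X_smul (i : ι) (h : K.Represents v z) :
    K.Represents ((MvPolynomial.X i : MvPolynomial ι k) • v) ((K.lowering i).onSyzygy N ≫ z) :=
  fun w => by
    rw [pairing_X_smul]
    exact h ⟨_, shift_mem_homogeneousPart i w.2⟩

end Represents

lemma represents_X_smul_zero (i : ι) (v : MvPolynomial ι k ⊗[k] M) :
    K.Represents ((MvPolynomial.X i : MvPolynomial ι k) • v)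
      (0 : K.syzygies.syzygy 0 ⟶ ModuleCat.of A M) := fun w => by
  rw [pairing_X_smul, LinearMap.comp_apply, shift_eq_zero_of_mem_homogeneousPart_zero i w.2,
    map_zero]
  rfl

variable [HasExt.{w} (ModuleCat.{u} A)]

lemma exists_represents {N : ℕ} (y : Ext (K.syzygies.syzygy 0) (ModuleCat.of A M) N) :
    ∃ v, (∃ z : K.syzygies.syzygy N ⟶ ModuleCat.of A M, K.Represents v z ∧
        (K.syzygies.iteratedClass N).comp (Ext.mk₀ z) (add_zero N) = y) ∧
      ∀ N', N' ≠ N → K.Represents v (0 : K.syzygies.syzygy N' ⟶ ModuleCat.of A M) := by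
  obtain ⟨z, rfl⟩ := K.syzygies.exists_iteratedClass_comp_mk₀ y
  obtain ⟨v, hv, hv_ne⟩ := exists_pairing_eq (k := k)
    (z.hom ∘ₗ (LinearMap.range (K.differential N)).mkQ : homogeneousPart A ι N →ₗ[A] M)
  exact ⟨v, ⟨z, fun w => (hv w).symm, rfl⟩, fun N' hN w => (hv_ne N' hN w.1 w.2).symm⟩

/-- The polynomials all of whose homogeneous components represent classes in `L`. -/
noncomputable def representingSubmodule
    (L : ∀ N, AddSubgroup (Ext (K.syzygies.syzygy 0) (ModuleCat.of A M) N))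
    (hL : ∀ {a n m : ℕ} (h : a + n = m) (r : Ext (K.syzygies.syzygy 0) (K.syzygies.syzygy 0) a)
      {e : Ext (K.syzygies.syzygy 0) (ModuleCat.of A M) n}, e ∈ L n → r.comp e h ∈ L m) :
    Submodule (MvPolynomial ι k) (MvPolynomial ι k ⊗[k] M) where
  carrier := {v | ∀ N, ∃ z : K.syzygies.syzygy N ⟶ ModuleCat.of A M, K.Represents v z ∧
    (K.syzygies.iteratedClass N).comp (Ext.mk₀ z) (add_zero N) ∈ L N}
  add_mem' hv hv' N := by
    obtain ⟨z, hz, hzL⟩ := hv N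
    obtain ⟨z', hz', hzL'⟩ := hv' N
    refine ⟨z + z', hz.add hz', ?_⟩
    rw [Ext.mk₀_add, Ext.comp_add]
    exact add_mem hzL hzL'
  zero_mem' N := ⟨0, fun w => by rw [map_zero]; rfl, by
    rw [Ext.mk₀_zero, Ext.comp_zero]
    exact zero_mem _⟩
  smul_mem' f := by
    induction f using MvPolynomial.induction_on with
    | C c =>
      intro v hv N
      obtain ⟨z, hz, hzL⟩ := hv N
      refine ⟨_, hz.C_smul c, ?_⟩
      rw [comp_mk₀_smul_id_comp]
      exact hL _ _ hzL
    | add f g hf hg =>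
      intro v hv N
      obtain ⟨z, hz, hzL⟩ := hf hv N
      obtain ⟨z', hz', hzL'⟩ := hg hv N
      refine ⟨z + z', add_smul f g v ▸ hz.add hz', ?_⟩
      rw [Ext.mk₀_add, Ext.comp_add]
      exact add_mem hzL hzL'
    | mul_X f j hf =>
      intro v hv
      rw [mul_smul]
      refine hf fun N => ?_
      cases N with
      | zero =>
        refine ⟨0, K.represents_X_smul_zero j v, ?_⟩
        rw [Ext.mk₀_zero, Ext.comp_zero]
        exact zero_mem _
      | succ N =>
        obtain ⟨z, hz, hzL⟩ := hv N
        refine ⟨_, hz.X_smul j, ?_⟩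
        rw [(K.lowering j).iteratedClass_comp_onSyzygy_comp z]
        exact hL _ _ hzL

/-- Hilbert's basis theorem, applied to the polynomials representing the classes in `Y`. -/
theorem exists_finset_forall_mem_extSpan [FiniteDimensional k M]
    (Y : Set (Σ N : ℕ, Ext (K.syzygies.syzygy 0) (ModuleCat.of A M) N)) :
    ∃ T : Finset (Σ N : ℕ, Ext (K.syzygies.syzygy 0) (ModuleCat.of A M) N), ↑T ⊆ Y ∧
      ∀ y ∈ Y, y.2 ∈ extSpan (T : Set _) y.1 := by
  classical
  choose rep map_rep rep_ne using fun y : Σ N : ℕ, Ext (K.syzygies.syzygy 0) (ModuleCat.of A M) N =>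
    K.exists_represents y.2
  have noetherian : IsNoetherian (MvPolynomial ι k) (MvPolynomial ι k ⊗[k] M) :=
    isNoetherian_of_isNoetherianRing_of_finite _ _
  obtain ⟨s, hsY, hs⟩ := (Submodule.fg_span_iff_fg_span_finset_subset (rep '' Y)).1
    (noetherian.noetherian _)
  obtain ⟨T, hTY, rfl⟩ := Finset.subset_set_image_iff.1 hsY
  let J := K.representingSubmodule (M := M) (extSpan (T : Set _)) extSpan_comp_mem
  have rep_mem_J : ∀ t ∈ T, rep t ∈ J := by
    intro t ht N
    rcases eq_or_ne N t.1 with rfl | hN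
    · obtain ⟨z, hz, hzt⟩ := map_rep t
      exact ⟨z, hz, hzt ▸ mem_extSpan ht⟩
    · refine ⟨0, rep_ne t N hN, ?_⟩
      rw [Ext.mk₀_zero, Ext.comp_zero]
      exact zero_mem _
  have span_le_J : Submodule.span (MvPolynomial ι k) (rep '' Y) ≤ J := by
    rw [hs, Submodule.span_le, Finset.coe_image]
    rintro _ ⟨t, ht, rfl⟩
    exact rep_mem_J t ht
  refine ⟨T, hTY, fun y hy => ?_⟩
  obtain ⟨z, hz, hzy⟩ := map_rep y
  obtain ⟨z', hz', hzL⟩ := span_le_J (Submodule.subset_span (Set.mem_image_of_mem rep hy)) y.1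
  rwa [← hz.unique hz', hzy] at hzL

/-- The retraction `p` embeds `Ext(X, M)` into the cohomology of the Koszul complex, and the section
`i` carries generators back. -/
theorem exists_finset_forall_mem_extSpan_of_retract [FiniteDimensional k M] {X : ModuleCat.{u} A}
    {i : X ⟶ K.syzygies.syzygy 0} {p : K.syzygies.syzygy 0 ⟶ X} (hip : i ≫ p = 𝟙 X)
    (Y : Set (Σ N : ℕ, Ext X (ModuleCat.of A M) N)) :
    ∃ T : Finset (Σ N : ℕ, Ext X (ModuleCat.of A M) N), ↑T ⊆ Y ∧
      ∀ y ∈ Y, y.2 ∈ extSpan (T : Set _) y.1 := by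
  classical
  obtain ⟨s, hsY, hs⟩ := K.exists_finset_forall_mem_extSpan (precomp p '' Y)
  obtain ⟨T, hTY, rfl⟩ := Finset.subset_set_image_iff.1 hsY
  refine ⟨T, hTY, fun y hy => ?_⟩
  have mem_span := hs _ (Set.mem_image_of_mem (precomp p) hy)
  rw [Finset.coe_image] at mem_span
  replace mem_span := comp_mem_extSpan p (zero_add y.1) (Ext.mk₀ i) mem_span
  dsimp only [precomp] at mem_span
  rwa [Ext.mk₀_comp_mk₀_assoc, hip, Ext.mk₀_id_comp] at mem_span

end KoszulData

end Noetherian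

/-! ### Generators of the cohomology -/

section Generators

open Abelian

namespace KoszulData

variable {k A ι : Type} [Field k] [Ring A] [Algebra k A]

lemma single_mem_homogeneousPart [DecidableEq ι] (α : ι →₀ ℕ) (a : A) :
    (Pi.single α a : (ι →₀ ℕ) → A) ∈ homogeneousPart A ι α.degree :=
  fun _ h => by rw [Pi.single_eq_of_ne fun h_eq => h (congrArg Finsupp.degree h_eq)]

variable [Fintype ι] [DecidableEq ι] (K : KoszulData k A ι)

lemma d_single (j : ι) :
    K.d (Pi.single (Finsupp.single j 1) 1) = Pi.single (0 : ι →₀ ℕ) (K.x j) := by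
  ext α
  rw [d_apply]
  by_cases h : α = 0
  · simp [h, Pi.single_apply, Finsupp.single_left_inj]
  · rw [Pi.single_eq_of_ne h]
    refine Finset.sum_eq_zero fun i _ => ?_
    rw [Pi.single_eq_of_ne, zero_mul]
    intro h_eq
    have degree_eq := congrArg Finsupp.degree h_eq
    rw [map_add, Finsupp.degree_single, Finsupp.degree_single, Nat.add_eq_right] at degree_eq
    exact h ((Finsupp.degree_eq_zero_iff α).1 degree_eq)

variable (A ι) in
/-- The inclusion of `A` as the degree zero part of the Koszul complex. -/
noncomputable def constants : A →ₗ[A] homogeneousPart A ι 0 :=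
  (LinearMap.single A (fun _ : ι →₀ ℕ => A) 0).codRestrict _ fun a => by
    simpa only [map_zero, LinearMap.coe_single] using single_mem_homogeneousPart (0 : ι →₀ ℕ) a

lemma constants_mem_range_differential {a : A} (ha : a ∈ Submodule.span A (Set.range K.x)) :
    constants A ι a ∈ LinearMap.range (K.differential 0) := by
  suffices Submodule.span A (Set.range K.x) ≤
    (LinearMap.range (K.differential 0)).comap (constants A ι) from this ha
  rw [Submodule.span_le]
  rintro _ ⟨j, rfl⟩
  refine ⟨⟨Pi.single (Finsupp.single j 1) 1, ?_⟩, Subtype.ext (K.d_single j)⟩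
  simpa only [Finsupp.degree_single] using single_mem_homogeneousPart (Finsupp.single j 1) (1 : A)

variable [CharZero k] [FiniteDimensional k A] {counit : A →ₐ[k] k}

/-- The map `c ↦ c • t` splits the augmentation of the Koszul complex. -/
lemma exists_retract_trivCat (counit_x : ∀ j, counit (K.x j) = 0) {t : A} (counit_t : counit t = 1)
    (mul_t : ∀ a, a * t - counit a • t ∈ Submodule.span A (Set.range K.x)) :
    ∃ (i : trivCat k A counit ⟶ K.syzygies.syzygy 0) (p : K.syzygies.syzygy 0 ⟶ trivCat k A counit),
      i ≫ p = 𝟙 _ := by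
  let _ : Module A k := Module.compHom k counit.toRingHom
  have smul_def (a : A) (c : k) : a • c = counit a * c := rfl
  let augmentation : homogeneousPart A ι 0 →ₗ[A] k :=
    { toFun w := counit (w.1 0)
      map_add' w w' := map_add counit _ _
      map_smul' a w := map_mul counit _ _ }
  have range_le : LinearMap.range (K.differential 0) ≤ LinearMap.ker augmentation := by
    rintro _ ⟨z, rfl⟩
    change counit (K.d z.1 0) = 0
    rw [d_apply, map_sum]
    exact Finset.sum_eq_zero fun i _ => by rw [map_mul, counit_x, mul_zero]
  let quotientMap := (LinearMap.range (K.differential 0)).mkQ ∘ₗ constants A ι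
  let coaugmentation : k →ₗ[A] (homogeneousPart A ι 0 ⧸ LinearMap.range (K.differential 0)) :=
    { toFun c := quotientMap (c • t)
      map_add' c c' := by rw [add_smul, map_add]
      map_smul' a c := by
        rw [RingHom.id_apply, ← map_smul, eq_comm, ← sub_eq_zero, ← map_sub, smul_def,
          smul_eq_mul, mul_smul_comm, mul_comm (counit a), mul_smul, ← smul_sub]
        exact (Submodule.Quotient.mk_eq_zero _).2
          (K.constants_mem_range_differential (Submodule.smul_of_tower_mem _ c (mul_t a))) }
  refine ⟨ModuleCat.ofHom coaugmentation, ModuleCat.ofHom (Submodule.liftQ _ _ range_le), ?_⟩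
  refine ModuleCat.hom_ext (LinearMap.ext fun c : k => ?_)
  change counit ((Pi.single 0 (c • t) : (ι →₀ ℕ) → A) 0) = c
  rw [Pi.single_eq_same, map_smul, counit_t, smul_eq_mul, mul_one]

end KoszulData

variable {k A : Type} [Field k] [Ring A] [Algebra k A] {X Y : ModuleCat.{0} A}

lemma ExtModGen.of_mem_extSpan {T : Finset (Σ n : ℕ, Ext X Y n)} {n : ℕ} {x : Ext X Y n}
    (hx : x ∈ extSpan (T : Set _) n) :
    ExtModGen (k := k) X Y (fun m => {y | (⟨m, y⟩ : Σ n : ℕ, Ext X Y n) ∈ T}) n x := by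
  induction hx using AddSubgroup.closure_induction with
  | mem e he =>
    obtain ⟨⟨b, y⟩, hy, a, r, rfl, rfl⟩ := he
    exact .act r (.of hy)
  | zero => exact .zero n
  | add x y _ _ hx hy => exact .add hx hy
  | neg x _ hx => exact neg_one_smul k x ▸ .smul _ hx

lemma ExtAlgGen.of_mem_extSpan {T : Finset (Σ n : ℕ, Ext X X n)} (one_le : ∀ y ∈ T, 1 ≤ y.1)
    {n : ℕ} (of_lt : ∀ m < n, ∀ y,
      ExtAlgGen (k := k) X (fun m => {y | (⟨m, y⟩ : Σ n : ℕ, Ext X X n) ∈ T}) m y)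
    {x : Ext X X n} (hx : x ∈ extSpan (T : Set _) n) :
    ExtAlgGen (k := k) X (fun m => {y | (⟨m, y⟩ : Σ n : ℕ, Ext X X n) ∈ T}) n x := by
  induction hx using AddSubgroup.closure_induction with
  | mem e he =>
    obtain ⟨⟨b, y⟩, hy, a, r, rfl, rfl⟩ := he
    exact .mul (of_lt a (Nat.lt_add_of_pos_right (one_le _ hy)) r) (.of hy)
  | zero => exact .zero n
  | add x y _ _ hx hy => exact .add hx hy
  | neg x _ hx => exact neg_one_smul k x ▸ .smul _ hx

lemma exists_finset_extAlgGen (scalar : ∀ f : X ⟶ X, ∃ c : k, f = c • 𝟙 X)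
    (noetherian : ∀ Y : Set (Σ n : ℕ, Ext X X n), ∃ T : Finset (Σ n : ℕ, Ext X X n),
      ↑T ⊆ Y ∧ ∀ y ∈ Y, y.2 ∈ extSpan (T : Set _) y.1) :
    ∃ S : Finset (Σ n : ℕ, Ext X X n),
      ∀ n x, ExtAlgGen (k := k) X (fun m => {y | (⟨m, y⟩ : Σ n : ℕ, Ext X X n) ∈ S}) n x := by
  obtain ⟨S, hS, mem_span⟩ := noetherian {y | 1 ≤ y.1}
  refine ⟨S, fun n => ?_⟩
  induction n using Nat.strong_induction_on with
  | _ n ih =>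
    intro x
    rcases Nat.eq_zero_or_pos n with rfl | hn
    · obtain ⟨f, rfl⟩ := (Ext.mk₀_bijective X X).2 x
      obtain ⟨c, rfl⟩ := scalar f
      exact Ext.comp_mk₀_id (Ext.mk₀ (c • 𝟙 X)) ▸ .smul c .one
    · exact .of_mem_extSpan (fun _ hy => hS hy) ih (mem_span ⟨n, x⟩ hn)

lemma exists_eq_smul_id_trivCat {counit : A →ₐ[k] k}
    (f : trivCat k A counit ⟶ trivCat k A counit) : ∃ c : k, f = c • 𝟙 _ := by
  let _ : Module A k := Module.compHom k counit.toRingHom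
  have algebraMap_smul (c d : k) : (algebraMap k A c • d : k) = c * d :=
    congrArg (· * d) (counit.commutes c)
  let g : k →ₗ[A] k := f.hom
  refine ⟨g 1, ModuleCat.hom_ext (LinearMap.ext fun c : k => ?_)⟩
  calc g c = g (algebraMap k A c • (1 : k)) := by rw [algebraMap_smul, mul_one]
    _ = c * g 1 := by rw [map_smul, algebraMap_smul]
    _ = algebraMap k A (g 1) • c := by rw [algebraMap_smul, mul_comm]

section FiniteGeneration

variable {ι : Type} [Fintype ι] [DecidableEq ι] [CharZero k] [FiniteDimensional k A]
  (K : KoszulData k A ι) {counit : A →ₐ[k] k}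

theorem KoszulData.exists_finset_extAlgGen (counit_x : ∀ j, counit (K.x j) = 0) {t : A}
    (counit_t : counit t = 1)
    (mul_t : ∀ a, a * t - counit a • t ∈ Submodule.span A (Set.range K.x)) :
    ∃ S : Finset (Σ n : ℕ, Ext (trivCat k A counit) (trivCat k A counit) n),
      ∀ n x, ExtAlgGen (k := k) (trivCat k A counit) (fun m => {y |
        (⟨m, y⟩ : Σ n : ℕ, Ext (trivCat k A counit) (trivCat k A counit) n) ∈ S}) n x := by
  obtain ⟨i, p, hip⟩ := K.exists_retract_trivCat counit_x counit_t mul_t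
  let _ : Module A k := Module.compHom k counit.toRingHom
  have : IsScalarTower k A k := ⟨fun c a d => show counit (c • a) * d = c * (counit a * d) by
    rw [map_smul, smul_eq_mul, mul_assoc]⟩
  exact Stmt1.exists_finset_extAlgGen exists_eq_smul_id_trivCat
    (K.exists_finset_forall_mem_extSpan_of_retract (M := k) hip)

theorem KoszulData.exists_finset_extModGen (counit_x : ∀ j, counit (K.x j) = 0) {t : A}
    (counit_t : counit t = 1)
    (mul_t : ∀ a, a * t - counit a • t ∈ Submodule.span A (Set.range K.x))
    (M : Type) [AddCommGroup M] [Module A M] [Module k M] [IsScalarTower k A M]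
    [FiniteDimensional k M] :
    ∃ T : Finset (Σ n : ℕ, Ext (trivCat k A counit) (ModuleCat.of A M) n),
      ∀ n x, ExtModGen (k := k) (trivCat k A counit) (ModuleCat.of A M) (fun m => {y |
        (⟨m, y⟩ : Σ n : ℕ, Ext (trivCat k A counit) (ModuleCat.of A M) n) ∈ T}) n x := by
  obtain ⟨i, p, hip⟩ := K.exists_retract_trivCat counit_x counit_t mul_t
  obtain ⟨T, -, mem_span⟩ := K.exists_finset_forall_mem_extSpan_of_retract (M := M) hip Set.univ
  exact ⟨T, fun n x => .of_mem_extSpan (mem_span ⟨n, x⟩ trivial)⟩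

end FiniteGeneration

end Generators

/-! ### Convolution and hit actions -/

section Slices

variable {k M N M' N' L : Type*} [Field k] [AddCommGroup M] [Module k M] [AddCommGroup N]
  [Module k N] [AddCommGroup M'] [Module k M'] [AddCommGroup N'] [Module k N'] [AddCommGroup L]
  [Module k L]

/-- Evaluation of a functional on the right tensor factor, `m ⊗ n ↦ f n • m`. -/
noncomputable def rightSlice : Module.Dual k N →ₗ[k] M ⊗[k] N →ₗ[k] M :=
  (TensorProduct.rid k M).toLinearMap.compRight k ∘ₗ LinearMap.lTensorHom M

/-- Evaluation of a functional on the left tensor factor, `m ⊗ n ↦ f m • n`. -/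
noncomputable def leftSlice : Module.Dual k M →ₗ[k] M ⊗[k] N →ₗ[k] N :=
  (TensorProduct.lid k N).toLinearMap.compRight k ∘ₗ LinearMap.rTensorHom N

@[simp]
lemma rightSlice_tmul (f : Module.Dual k N) (m : M) (n : N) :
    rightSlice f (m ⊗ₜ[k] n) = f n • m := rfl

@[simp]
lemma leftSlice_tmul (f : Module.Dual k M) (m : M) (n : N) :
    leftSlice f (m ⊗ₜ[k] n) = f m • n := rfl

lemma rightSlice_map (p : M →ₗ[k] M') (q : N →ₗ[k] N') (f : Module.Dual k N') (T : M ⊗[k] N) :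
    rightSlice f (TensorProduct.map p q T) = p (rightSlice (f ∘ₗ q) T) := by
  induction T using TensorProduct.induction_on with
  | zero => simp
  | tmul m n => simp
  | add S T hS hT => simp only [map_add, hS, hT]

lemma leftSlice_map (p : M →ₗ[k] M') (q : N →ₗ[k] N') (f : Module.Dual k M') (T : M ⊗[k] N) :
    leftSlice f (TensorProduct.map p q T) = q (leftSlice (f ∘ₗ p) T) := by
  induction T using TensorProduct.induction_on with
  | zero => simp
  | tmul m n => simp
  | add S T hS hT => simp only [map_add, hS, hT]

lemma leftSlice_eq_rightSlice_comm (f : Module.Dual k M) (T : M ⊗[k] N) :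
    leftSlice f T = rightSlice f (TensorProduct.comm k M N T) := by
  induction T using TensorProduct.induction_on with
  | zero => simp
  | tmul m n => simp
  | add S T hS hT => simp only [map_add, hS, hT]

lemma eq_zero_of_rightSlice_eq_zero {T : M ⊗[k] N}
    (hT : ∀ f : Module.Dual k N, rightSlice f T = 0) : T = 0 := by
  classical
  let b := Module.Basis.ofVectorSpace k N
  have coeff_eq : ∀ (S : M ⊗[k] N) i,
      TensorProduct.equivFinsuppOfBasisRight b S i = rightSlice (b.coord i) S := by
    intro S i
    induction S using TensorProduct.induction_on with
    | zero => simp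
    | tmul m n => simp
    | add S S' hS hS' => simp only [map_add, Finsupp.add_apply, hS, hS']
  refine (TensorProduct.equivFinsuppOfBasisRight b).map_eq_zero_iff.1 (Finsupp.ext fun i => ?_)
  rw [coeff_eq, hT, Finsupp.zero_apply]

lemma mem_range_rTensor_of_rightSlice_mem {W : Submodule k M} {T : M ⊗[k] N}
    (hT : ∀ f : Module.Dual k N, rightSlice f T ∈ W) :
    T ∈ LinearMap.range (LinearMap.rTensor N W.subtype) := by
  have quotient_eq_zero : LinearMap.rTensor N W.mkQ T = 0 :=
    eq_zero_of_rightSlice_eq_zero fun f => by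
      rw [LinearMap.rTensor, rightSlice_map, LinearMap.comp_id]
      exact (Submodule.Quotient.mk_eq_zero W).2 (hT f)
  exact (rTensor_exact N (LinearMap.exact_subtype_mkQ W) W.mkQ_surjective T).1 quotient_eq_zero

lemma eq_of_rightSlice_mem {W : Submodule k M} {T : M ⊗[k] N}
    (hT : ∀ f : Module.Dual k N, rightSlice f T ∈ W) {Φ Ψ : M ⊗[k] N →ₗ[k] L}
    (hΦΨ : ∀ w ∈ W, ∀ n, Φ (w ⊗ₜ n) = Ψ (w ⊗ₜ n)) : Φ T = Ψ T := by
  obtain ⟨S, rfl⟩ := mem_range_rTensor_of_rightSlice_mem hT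
  have comp_eq : Φ ∘ₗ LinearMap.rTensor N W.subtype = Ψ ∘ₗ LinearMap.rTensor N W.subtype :=
    TensorProduct.ext' fun w n => hΦΨ w w.2 n
  exact LinearMap.congr_fun comp_eq S

lemma eq_of_leftSlice_mem {W : Submodule k N} {T : M ⊗[k] N}
    (hT : ∀ f : Module.Dual k M, leftSlice f T ∈ W) {Φ Ψ : M ⊗[k] N →ₗ[k] L}
    (hΦΨ : ∀ m, ∀ w ∈ W, Φ (m ⊗ₜ w) = Ψ (m ⊗ₜ w)) : Φ T = Ψ T := by
  have key := eq_of_rightSlice_mem (T := TensorProduct.comm k M N T)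
    (Φ := Φ ∘ₗ (TensorProduct.comm k N M).toLinearMap)
    (Ψ := Ψ ∘ₗ (TensorProduct.comm k N M).toLinearMap)
    (fun f => leftSlice_eq_rightSlice_comm f T ▸ hT f) fun w hw m => hΦΨ m w hw
  simpa using key

lemma eq_of_forall_dual_apply_eq {a b : M} (h : ∀ f : Module.Dual k M, f a = f b) : a = b :=
  sub_eq_zero.1 <| (Module.forall_dual_apply_eq_zero_iff k _).1 fun f => by
    rw [map_sub, h, sub_self]

end Slices

section Convolution

open Coalgebra LinearMap

variable {k C R S : Type*} [Field k] [AddCommGroup C] [Module k C] [Coalgebra k C] [Ring R]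
  [Algebra k R] [Ring S] [Algebra k S]

/-- The convolution product `a ↦ f a₁ * g a₂`; it is the product of `WithConv (C →ₗ[k] R)`,
stated without the type synonym. -/
noncomputable def convolution (f g : C →ₗ[k] R) : C →ₗ[k] R :=
  mul' k R ∘ₗ TensorProduct.map f g ∘ₗ comul

local infixl:70 " ⋆ " => convolution

lemma convolution_apply (f g : C →ₗ[k] R) (a : C) :
    (f ⋆ g) a = mul' k R (TensorProduct.map f g (comul a)) := rfl

lemma convolution_assoc (f g h : C →ₗ[k] R) : f ⋆ g ⋆ h = f ⋆ (g ⋆ h) :=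
  WithConv.toConv_injective
    (mul_assoc (WithConv.toConv f) (WithConv.toConv g) (WithConv.toConv h))

lemma convolution_sum {ι : Type*} (f : C →ₗ[k] R) (s : Finset ι) (g : ι → C →ₗ[k] R) :
    f ⋆ ∑ i ∈ s, g i = ∑ i ∈ s, f ⋆ g i := by
  ext a
  simp only [convolution_apply, LinearMap.sum_apply, ← TensorProduct.mapBilinear_apply, map_sum]

lemma neg_convolution (f g : C →ₗ[k] R) : (-f) ⋆ g = -(f ⋆ g) :=
  WithConv.toConv_injective (neg_mul (WithConv.toConv f) (WithConv.toConv g))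

lemma convolution_neg (f g : C →ₗ[k] R) : f ⋆ (-g) = -(f ⋆ g) :=
  WithConv.toConv_injective (mul_neg (WithConv.toConv f) (WithConv.toConv g))

variable (k C R) in
/-- The unit `a ↦ ε(a) 1` of the convolution product. -/
noncomputable def convolutionOne : C →ₗ[k] R := Algebra.linearMap k R ∘ₗ counit

lemma convolutionOne_apply (a : C) : convolutionOne k C R a = counit (R := k) a • (1 : R) :=
  Algebra.algebraMap_eq_smul_one _

lemma convolutionOne_convolution (f : C →ₗ[k] R) : convolutionOne k C R ⋆ f = f :=
  WithConv.toConv_injective (one_mul (WithConv.toConv f))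

lemma convolution_convolutionOne (f : C →ₗ[k] R) : f ⋆ convolutionOne k C R = f :=
  WithConv.toConv_injective (mul_one (WithConv.toConv f))

lemma algHom_comp_convolution (φ : R →ₐ[k] S) (f g : C →ₗ[k] R) :
    φ.toLinearMap ∘ₗ (f ⋆ g) = (φ.toLinearMap ∘ₗ f) ⋆ (φ.toLinearMap ∘ₗ g) := by
  ext a
  simp only [LinearMap.comp_apply, convolution_apply]
  generalize comul (R := k) a = T
  induction T using TensorProduct.induction_on with
  | zero => simp
  | tmul x y => simp
  | add T T' hT hT' => simp only [map_add, hT, hT']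

lemma algHom_comp_convolutionOne (φ : R →ₐ[k] S) :
    φ.toLinearMap ∘ₗ convolutionOne k C R = convolutionOne k C S := by
  ext a
  simp [convolutionOne_apply]

/-- The right hit action of functionals, `a ↦ f a₂ • a₁`. -/
noncomputable def rightHit : Module.Dual k C →ₗ[k] Module.End k C where
  toFun f := rightSlice f ∘ₗ comul
  map_add' f g := by rw [map_add, add_comp]
  map_smul' c f := by rw [map_smul, smul_comp, RingHom.id_apply]

/-- The left hit action of functionals, `a ↦ f a₁ • a₂`. -/
noncomputable def leftHit : Module.Dual k C →ₗ[k] Module.End k C where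
  toFun f := leftSlice f ∘ₗ comul
  map_add' f g := by rw [map_add, add_comp]
  map_smul' c f := by rw [map_smul, smul_comp, RingHom.id_apply]

lemma rightHit_apply (f : Module.Dual k C) (a : C) : rightHit f a = rightSlice f (comul a) := rfl

lemma leftHit_apply (f : Module.Dual k C) (a : C) : leftHit f a = leftSlice f (comul a) := rfl

lemma apply_rightHit (f g : Module.Dual k C) (a : C) : g (rightHit f a) = (g ⋆ f) a := by
  rw [rightHit_apply, convolution_apply]
  generalize comul (R := k) a = T
  induction T using TensorProduct.induction_on with
  | zero => simp
  | tmul x y => simp [mul_comm]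
  | add T T' hT hT' => simp only [map_add, hT, hT']

lemma apply_leftHit (f g : Module.Dual k C) (a : C) : g (leftHit f a) = (f ⋆ g) a := by
  rw [leftHit_apply, convolution_apply]
  generalize comul (R := k) a = T
  induction T using TensorProduct.induction_on with
  | zero => simp
  | tmul x y => simp
  | add T T' hT hT' => simp only [map_add, hT, hT']

lemma rightHit_rightHit (f g : Module.Dual k C) (a : C) :
    rightHit f (rightHit g a) = rightHit (f ⋆ g) a :=
  eq_of_forall_dual_apply_eq (k := k) fun h => by
    rw [apply_rightHit, apply_rightHit, apply_rightHit, convolution_assoc]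

lemma leftHit_rightHit (f g : Module.Dual k C) (a : C) :
    leftHit f (rightHit g a) = rightHit g (leftHit f a) :=
  eq_of_forall_dual_apply_eq (k := k) fun h => by
    rw [apply_rightHit, apply_leftHit, apply_rightHit, apply_leftHit, convolution_assoc]

lemma rightHit_counit (a : C) : rightHit (counit (R := k)) a = a :=
  eq_of_forall_dual_apply_eq (k := k) fun h => by
    rw [apply_rightHit]
    exact LinearMap.congr_fun (convolution_convolutionOne h) a

lemma leftHit_counit (a : C) : leftHit (counit (R := k)) a = a :=
  eq_of_forall_dual_apply_eq (k := k) fun h => by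
    rw [apply_leftHit]
    exact LinearMap.congr_fun (convolutionOne_convolution h) a

lemma convolution_smulRight (f : C →ₗ[k] R) (g : Module.Dual k C) (x : R) (a : C) :
    (f ⋆ g.smulRight x) a = f (rightHit g a) * x := by
  rw [rightHit_apply, convolution_apply]
  generalize comul (R := k) a = T
  induction T using TensorProduct.induction_on with
  | zero => simp
  | tmul y z => simp
  | add T T' hT hT' => simp only [map_add, add_mul, hT, hT']

end Convolution

section Primitive

open Coalgebra Polynomial

variable {k A : Type*} [Field k] [Ring A] [Algebra k A] [Coalgebra k A]

lemma rightHit_aeval_of_comul_pow {y : A}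
    (comul_pow : ∀ n : ℕ, comul (R := k) (y ^ n) = (y ⊗ₜ 1 + 1 ⊗ₜ y) ^ n) (f : Module.Dual k A)
    (p : k[X]) : rightHit f (aeval y p) =
      aeval y (∑ j ∈ Finset.range (p.natDegree + 1), f (y ^ j) • hasseDeriv j p) := by
  have rightHit_pow {n : ℕ} (hn : n ∈ Finset.range (p.natDegree + 1)) : rightHit f (y ^ n) =
      aeval y (∑ j ∈ Finset.range (p.natDegree + 1), f (y ^ j) • hasseDeriv j (X ^ n : k[X])) := by
    have comm : Commute ((1 : A) ⊗ₜ[k] y) (y ⊗ₜ[k] (1 : A)) := by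
      simp [Commute, SemiconjBy]
    rw [rightHit_apply, comul_pow, add_comm, comm.add_pow, map_sum, map_sum]
    refine Finset.sum_subset_zero_on_sdiff
      (Finset.range_subset_range.2 (Nat.succ_le_of_lt (Finset.mem_range.1 hn)))
      (fun j hj => ?_) fun j _ => ?_
    · have n_lt_j : n < j := by simpa using (Finset.mem_sdiff.1 hj).2
      rw [← monomial_one_right_eq_X_pow, hasseDeriv_monomial, Nat.choose_eq_zero_of_lt n_lt_j]
      simp
    · rw [← monomial_one_right_eq_X_pow, hasseDeriv_monomial, map_smul, aeval_monomial,
        Algebra.TensorProduct.tmul_pow, Algebra.TensorProduct.tmul_pow, one_pow, one_pow,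
        Algebra.TensorProduct.tmul_mul_tmul, one_mul, mul_one, ← nsmul_eq_mul', map_nsmul,
        rightSlice_tmul, mul_one, map_natCast, ← nsmul_eq_mul, smul_comm]
  conv_lhs => rw [p.as_sum_range]
  conv_rhs => enter [2, 2, j]; rw [p.as_sum_range, map_sum]
  simp only [← smul_X_eq_monomial, map_sum, map_smul, Finset.smul_sum]
  rw [Finset.sum_comm]
  refine Finset.sum_congr rfl fun n hn => ?_
  rw [aeval_X_pow, rightHit_pow hn]
  simp only [map_sum, map_smul, Finset.smul_sum]
  exact Finset.sum_congr rfl fun j _ => smul_comm _ _ _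

lemma coeff_sum_smul_hasseDeriv {c : ℕ → k} (hc : c 0 = 0) {p : k[X]} {m : ℕ}
    (hm : p.natDegree ≤ m + 1) :
    (∑ j ∈ Finset.range (p.natDegree + 1), c j • hasseDeriv j p).coeff m =
      c 1 * ((m + 1) * p.coeff (m + 1)) := by
  rw [finsetSum_coeff, Finset.sum_eq_single 1]
  · rw [coeff_smul, hasseDeriv_coeff, Nat.choose_one_right, smul_eq_mul, Nat.cast_succ]
  · intro j _ hj
    rcases j.eq_zero_or_pos with rfl | hj_pos
    · rw [hc, zero_smul, coeff_zero]
    · rw [coeff_smul, hasseDeriv_coeff, coeff_eq_zero_of_natDegree_lt (by omega), mul_zero,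
        smul_zero]
  · intro one_notMem
    have natDegree_eq_zero : p.natDegree = 0 := by simpa using one_notMem
    rw [hasseDeriv_eq_zero_of_lt_natDegree _ _ (natDegree_eq_zero ▸ one_pos), smul_zero,
      coeff_zero]

/-- A functional `f` with `f 1 = 0` and `f y ≠ 0` would turn the minimal polynomial of `y` into a
nonzero relation of smaller degree. -/
lemma mem_span_one_of_comul_pow [CharZero k] {y : A} (integral : IsIntegral k y)
    (comul_pow : ∀ n : ℕ, comul (R := k) (y ^ n) = (y ⊗ₜ 1 + 1 ⊗ₜ y) ^ n) :
    y ∈ Submodule.span k {(1 : A)} := by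
  by_contra y_notMem
  have : Nontrivial A := nontrivial_of_ne y 0 (ne_of_mem_of_not_mem (zero_mem _) y_notMem).symm
  obtain ⟨f, f_y, span_le_ker⟩ := Submodule.exists_le_ker_of_notMem y_notMem
  have f_one : f (y ^ 0) = 0 := by
    rw [pow_zero]
    exact span_le_ker (Submodule.mem_span_singleton_self 1)
  obtain ⟨q, q_eq⟩ : ∃ q, q = ∑ j ∈ Finset.range ((minpoly k y).natDegree + 1),
    f (y ^ j) • hasseDeriv j (minpoly k y) := ⟨_, rfl⟩
  obtain ⟨d, natDegree_eq⟩ : ∃ d, (minpoly k y).natDegree = d + 1 :=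
    Nat.exists_eq_succ_of_ne_zero (minpoly.natDegree_pos integral).ne'
  have aeval_q : aeval y q = 0 := by
    rw [q_eq, ← rightHit_aeval_of_comul_pow comul_pow, minpoly.aeval, map_zero]
  have degree_q_lt : q.degree < (minpoly k y).degree := by
    rw [degree_eq_natDegree (minpoly.ne_zero integral), degree_lt_iff_coeff_zero]
    intro m hm
    rw [q_eq, coeff_sum_smul_hasseDeriv (c := fun j => f (y ^ j)) f_one (Nat.le_succ_of_le hm),
      coeff_eq_zero_of_natDegree_lt (Nat.lt_succ_of_le hm), mul_zero, mul_zero]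
  have q_eq_zero : q = 0 := by
    by_contra q_ne_zero
    exact degree_q_lt.not_ge (minpoly.degree_le_of_ne_zero k y q_ne_zero aeval_q)
  have coeff_q : q.coeff d = f y * (d + 1) := by
    rw [q_eq, coeff_sum_smul_hasseDeriv (c := fun j => f (y ^ j)) f_one natDegree_eq.le,
      ← natDegree_eq, (minpoly.monic integral).coeff_natDegree, mul_one, pow_one]
  rw [q_eq_zero, coeff_zero, eq_comm] at coeff_q
  exact mul_ne_zero f_y d.cast_add_one_ne_zero coeff_q

lemma eq_zero_of_comul_pow [CharZero k] {y : A} (integral : IsIntegral k y)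
    (comul_pow : ∀ n : ℕ, comul (R := k) (y ^ n) = (y ⊗ₜ 1 + 1 ⊗ₜ y) ^ n) : y = 0 := by
  obtain ⟨c, rfl⟩ := Submodule.mem_span_singleton.1 (mem_span_one_of_comul_pow integral comul_pow)
  have comul_one : comul (R := k) (1 : A) = 1 ⊗ₜ 1 := by
    simpa [Algebra.TensorProduct.one_def] using comul_pow 0
  have doubled : c • (1 : A) ⊗ₜ[k] (1 : A) = c • (1 ⊗ₜ 1) + c • (1 ⊗ₜ 1) := by
    simpa [comul_one, smul_tmul'] using comul_pow 1
  have comul_eq_zero : comul (R := k) (c • (1 : A)) = 0 := by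
    rw [map_smul, comul_one]
    exact left_eq_add.1 doubled
  rw [← rightHit_counit (k := k) (c • 1), rightHit_apply, comul_eq_zero, map_zero]

end Primitive

section TraceElement

open Coalgebra Module

variable (k C : Type*) [Field k] [AddCommGroup C] [Module k C] [Coalgebra k C]
  [FiniteDimensional k C]

/-- The element whose value under a functional `f` is the trace of `a ↦ f a₂ • a₁`. -/
noncomputable def traceElement : C :=
  (evalEquiv k C).symm (LinearMap.trace k C ∘ₗ rightHit)

variable {C}

lemma apply_traceElement (f : Dual k C) :
    f (traceElement k C) = LinearMap.trace k C (rightHit f) := by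
  rw [← Dual.eval_apply, ← evalEquiv_toLinearMap, traceElement]
  exact LinearMap.congr_fun ((evalEquiv k C).apply_symm_apply _) f

variable (C) in
lemma counit_traceElement : counit (traceElement k C) = (finrank k C : k) := by
  rw [apply_traceElement, LinearMap.ext (f := rightHit (counit (R := k))) (g := 1) rightHit_counit,
    LinearMap.trace_one]

end TraceElement

/-! ### Hopf superalgebras and the parity involution -/

open Coalgebra in
/-- A cocommutative Hopf superalgebra whose `ℤ/2`-grading is recorded by the parity involution
`σ`, equal to `(-1)^{|a|}` on homogeneous elements. Both sign rules are written in the ordinary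
tensor square with `2 (-1)^{|b||c|} (b ⊗ c) = b ⊗ c + σ b ⊗ c + b ⊗ σ c - σ b ⊗ σ c`. -/
structure CocommSuperHopf (k A : Type*) [Field k] [Ring A] [Algebra k A] [Coalgebra k A] where
  parity : A →ₐ[k] A
  antipode : A →ₗ[k] A
  parity_parity (a : A) : parity (parity a) = a
  antipode_parity (a : A) : antipode (parity a) = parity (antipode a)
  counit_one : counit (R := k) (1 : A) = 1
  counit_mul (a b : A) : counit (R := k) (a * b) = counit (R := k) a * counit (R := k) b
  comul_one : comul (R := k) (1 : A) = 1 ⊗ₜ 1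
  comul_parity (a : A) : comul (R := k) (parity a) =
    TensorProduct.map parity.toLinearMap parity.toLinearMap (comul a)
  comul_mul (a b : A) : (2 : k) • comul (R := k) (a * b) =
    comul a * comul b + comul a * TensorProduct.map parity.toLinearMap .id (comul b) +
      TensorProduct.map .id parity.toLinearMap (comul a) * comul b -
      TensorProduct.map .id parity.toLinearMap (comul a) *
        TensorProduct.map parity.toLinearMap .id (comul b)
  comul_comm (a : A) : (2 : k) • TensorProduct.comm k A A (comul a) =
    comul a + TensorProduct.map parity.toLinearMap .id (comul a) +
      TensorProduct.map .id parity.toLinearMap (comul a) -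
      TensorProduct.map parity.toLinearMap parity.toLinearMap (comul a)
  antipode_convolution_id : convolution antipode .id = convolutionOne k A A
  id_convolution_antipode : convolution .id antipode = convolutionOne k A A

namespace CocommSuperHopf

open Coalgebra

local infixl:70 " ⋆ " => convolution

variable {k A : Type*} [Field k] [Ring A] [Algebra k A] [Coalgebra k A]

section Parity

/-- The linear map underlying the parity involution. -/
abbrev parityLin (S : CocommSuperHopf k A) : A →ₗ[k] A := S.parity.toLinearMap

/-- The projection `a ↦ (a + σ a) / 2` onto the even part. -/
noncomputable def evenPart (S : CocommSuperHopf k A) : A →ₗ[k] A :=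
  (2⁻¹ : k) • (LinearMap.id + S.parityLin)

/-- The projection `a ↦ (a - σ a) / 2` onto the odd part. -/
noncomputable def oddPart (S : CocommSuperHopf k A) : A →ₗ[k] A :=
  (2⁻¹ : k) • (LinearMap.id - S.parityLin)

/-- The functionals vanishing on the even part. -/
def oddDual (S : CocommSuperHopf k A) : Submodule k (Module.Dual k A) where
  carrier := {f | f ∘ₗ S.parityLin = -f}
  add_mem' {f g} hf hg := by rw [Set.mem_ofPred, LinearMap.add_comp, hf, hg, neg_add]
  zero_mem' := by rw [Set.mem_ofPred, LinearMap.zero_comp, neg_zero]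
  smul_mem' c f hf := by rw [Set.mem_ofPred, LinearMap.smul_comp, hf, smul_neg]

variable (S : CocommSuperHopf k A)

lemma evenPart_apply (a : A) : S.evenPart a = (2⁻¹ : k) • (a + S.parity a) := rfl

lemma oddPart_apply (a : A) : S.oddPart a = (2⁻¹ : k) • (a - S.parity a) := rfl

lemma mem_oddDual {f : Module.Dual k A} : f ∈ S.oddDual ↔ f ∘ₗ S.parityLin = -f := Iff.rfl

variable {S} in
lemma apply_parity_of_mem_oddDual {f : Module.Dual k A} (hf : f ∈ S.oddDual) (a : A) :
    f (S.parity a) = -f a :=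
  LinearMap.congr_fun hf a

lemma parityLin_comp_parityLin : S.parityLin ∘ₗ S.parityLin = LinearMap.id :=
  LinearMap.ext S.parity_parity

lemma sub_comp_parityLin_mem_oddDual (f : Module.Dual k A) :
    f - f ∘ₗ S.parityLin ∈ S.oddDual := by
  rw [mem_oddDual, LinearMap.sub_comp, LinearMap.comp_assoc, parityLin_comp_parityLin,
    LinearMap.comp_id, neg_sub]

lemma comp_oddPart_mem_oddDual (f : Module.Dual k A) : f ∘ₗ S.oddPart ∈ S.oddDual := by
  rw [oddPart, LinearMap.comp_smul, LinearMap.comp_sub, LinearMap.comp_id]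
  exact S.oddDual.smul_mem _ (S.sub_comp_parityLin_mem_oddDual f)

lemma rightHit_parity (f : Module.Dual k A) (a : A) :
    rightHit f (S.parity a) = S.parity (rightHit (f ∘ₗ S.parityLin) a) := by
  rw [rightHit_apply, comul_parity, rightSlice_map]
  rfl

variable {S} in
lemma rightHit_parity_of_mem_oddDual {f : Module.Dual k A} (hf : f ∈ S.oddDual) (a : A) :
    rightHit f (S.parity a) = -S.parity (rightHit f a) := by
  rw [rightHit_parity, S.mem_oddDual.1 hf, map_neg, LinearMap.neg_apply, map_neg]

lemma comp_parityLin_convolution_comp_parityLin {R : Type*} [Ring R] [Algebra k R]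
    (p q : A →ₗ[k] R) :
    (p ∘ₗ S.parityLin) ⋆ (q ∘ₗ S.parityLin) = (p ⋆ q) ∘ₗ S.parityLin := by
  ext a
  rw [LinearMap.comp_apply, convolution_apply, convolution_apply, TensorProduct.map_comp,
    LinearMap.comp_apply, ← S.comul_parity]
  rfl

lemma parity_oddPart (a : A) : S.parity (S.oddPart a) = -S.oddPart a := by
  rw [oddPart_apply, map_smul, map_sub, parity_parity, ← smul_neg, neg_sub]

variable {S} in
lemma oddPart_of_parity_eq {a : A} (ha : S.parity a = a) : S.oddPart a = 0 := by
  rw [oddPart_apply, ha, sub_self, smul_zero]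

section NeZeroTwo

variable [NeZero (2 : k)]

lemma evenPart_add_oddPart : S.evenPart + S.oddPart = LinearMap.id := by
  rw [evenPart, oddPart, ← smul_add, add_add_sub_cancel, ← two_smul k,
    inv_smul_smul₀ two_ne_zero]

lemma evenPart_apply_add_oddPart_apply (a : A) : S.evenPart a + S.oddPart a = a :=
  LinearMap.congr_fun S.evenPart_add_oddPart a

variable {S} in
lemma oddPart_of_parity_eq_neg {a : A} (ha : S.parity a = -a) : S.oddPart a = a := by
  rw [oddPart_apply, ha, sub_neg_eq_add, ← two_smul k, inv_smul_smul₀ two_ne_zero]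

variable {S} in
lemma apply_oddPart_of_mem_oddDual {f : Module.Dual k A} (hf : f ∈ S.oddDual) (a : A) :
    f (S.oddPart a) = f a := by
  rw [oddPart_apply, map_smul, map_sub, apply_parity_of_mem_oddDual hf, sub_neg_eq_add,
    ← two_smul k, inv_smul_smul₀ two_ne_zero]

variable {S} in
lemma convolution_comm_of_mem_oddDual {f : Module.Dual k A} (hf : f ∈ S.oddDual)
    (g : Module.Dual k A) : g ⋆ f = f ⋆ (g ∘ₗ S.parityLin) := by
  ext a
  have comm_apply (T : A ⊗[k] A) : LinearMap.mul' k k (TensorProduct.map f g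
      (TensorProduct.comm k A A T)) = LinearMap.mul' k k (TensorProduct.map g f T) := by
    rw [TensorProduct.map_comm, LinearMap.mul'_comm]
  have twisted := congr_arg (fun T => LinearMap.mul' k k (TensorProduct.map f g T))
    (S.comul_comm a)
  simp only [map_add, map_sub, map_smul, comm_apply, TensorProduct.map_map, LinearMap.comp_id,
    ← convolution_apply] at twisted
  rw [S.mem_oddDual.1 hf, neg_convolution, neg_convolution, LinearMap.neg_apply,
    LinearMap.neg_apply, add_neg_cancel, zero_add, sub_neg_eq_add, ← two_smul k] at twisted
  exact smul_right_injective k two_ne_zero twisted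

end NeZeroTwo

end Parity

/-! ### The odd filtration -/

section OddFiltration

/-- The filtration with `F 0 = ⊥` in which `F (m + 1)` consists of the elements sent to `F m` by the
right hits of all odd functionals. Its first step is the even sub-Hopf algebra on which the odd part
of the dual acts trivially, and right multiplication by odd primitives raises it by one. -/
noncomputable def oddFiltration (S : CocommSuperHopf k A) : ℕ → Submodule k A
  | 0 => ⊥
  | m + 1 => ⨅ g : S.oddDual, (oddFiltration S m).comap (rightHit g.1)

variable {S : CocommSuperHopf k A} {m : ℕ} {a : A}

lemma oddFiltration_zero : S.oddFiltration 0 = ⊥ := rfl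

lemma mem_oddFiltration_succ :
    a ∈ S.oddFiltration (m + 1) ↔ ∀ g ∈ S.oddDual, rightHit g a ∈ S.oddFiltration m := by
  simp only [oddFiltration, Submodule.mem_iInf, Submodule.mem_comap, Subtype.forall]

lemma mem_oddFiltration_one :
    a ∈ S.oddFiltration 1 ↔ ∀ g ∈ S.oddDual, rightHit g a = 0 := by
  simp only [mem_oddFiltration_succ, oddFiltration_zero, Submodule.mem_bot]

lemma parity_mem_oddFiltration (ha : a ∈ S.oddFiltration m) :
    S.parity a ∈ S.oddFiltration m := by
  induction m generalizing a with
  | zero => rw [oddFiltration_zero, Submodule.mem_bot] at ha ⊢; rw [ha, map_zero]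
  | succ m ih =>
    refine mem_oddFiltration_succ.2 fun g hg => ?_
    rw [rightHit_parity_of_mem_oddDual hg]
    exact neg_mem (ih (mem_oddFiltration_succ.1 ha g hg))

lemma leftHit_mem_oddFiltration (u : Module.Dual k A) (ha : a ∈ S.oddFiltration m) :
    leftHit u a ∈ S.oddFiltration m := by
  induction m generalizing a with
  | zero => rw [oddFiltration_zero, Submodule.mem_bot] at ha ⊢; rw [ha, map_zero]
  | succ m ih =>
    refine mem_oddFiltration_succ.2 fun g hg => ?_
    rw [← leftHit_rightHit]
    exact ih (mem_oddFiltration_succ.1 ha g hg)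

section NeZeroTwo

variable [NeZero (2 : k)]

lemma rightHit_mul_self (g : S.oddDual) : rightHit g.1 * rightHit g.1 = 0 := by
  have anticomm := convolution_comm_of_mem_oddDual g.2 g.1
  rw [S.mem_oddDual.1 g.2, convolution_neg, eq_neg_iff_add_eq_zero, ← two_smul k] at anticomm
  ext a
  rw [Module.End.mul_apply, rightHit_rightHit, (smul_eq_zero_iff_right two_ne_zero).1 anticomm,
    map_zero]

/-- The right hits of odd functionals anticommute, so they extend to the exterior algebra. -/
noncomputable def oddHits (S : CocommSuperHopf k A) :
    ExteriorAlgebra k S.oddDual →ₐ[k] Module.End k A :=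
  ExteriorAlgebra.lift k ⟨rightHit ∘ₗ S.oddDual.subtype, rightHit_mul_self⟩

lemma oddHits_ι (g : S.oddDual) : S.oddHits (ExteriorAlgebra.ι k g) = rightHit g.1 :=
  ExteriorAlgebra.lift_ι_apply ..

lemma mem_oddFiltration_of_oddHits {n : ℕ}
    (ha : ∀ g : Fin n → S.oddDual, S.oddHits (ExteriorAlgebra.ιMulti k n g) a ∈ S.oddFiltration m) :
    a ∈ S.oddFiltration (m + n) := by
  induction n generalizing m with
  | zero => simpa using ha Fin.elim0
  | succ n ih =>
    rw [← add_assoc, add_right_comm]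
    refine ih fun v => mem_oddFiltration_succ.2 fun g hg => ?_
    have hits_cons := ha (Matrix.vecCons ⟨g, hg⟩ v)
    rwa [ExteriorAlgebra.ιMulti_succ_apply, map_mul, Matrix.cons_val_zero, Matrix.tail_cons,
      oddHits_ι] at hits_cons

lemma exists_oddFiltration_eq_top [FiniteDimensional k A] (S : CocommSuperHopf k A) :
    ∃ m, S.oddFiltration m = ⊤ := by
  have hits_eq_zero (g : Fin (Module.finrank k S.oddDual + 1) → S.oddDual) :
      ExteriorAlgebra.ιMulti k _ g = 0 :=
    AlternatingMap.map_linearDependent _ g fun independent => by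
      have card_le := LinearIndependent.fintype_card_le_finrank (R := k) (b := g) independent
      rw [Fintype.card_fin] at card_le
      lia
  refine ⟨_, eq_top_iff.2 fun a _ =>
    mem_oddFiltration_of_oddHits (m := 0) (n := Module.finrank k S.oddDual + 1) fun g => ?_⟩
  rw [hits_eq_zero, map_zero, LinearMap.zero_apply]
  exact zero_mem _

lemma rightHit_rightHit_of_mem_oddDual {g : Module.Dual k A} (hg : g ∈ S.oddDual)
    (u : Module.Dual k A) (a : A) :
    rightHit g (rightHit u a) = rightHit (u ∘ₗ S.parityLin) (rightHit g a) := by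
  rw [rightHit_rightHit, rightHit_rightHit, convolution_comm_of_mem_oddDual hg,
    LinearMap.comp_assoc, parityLin_comp_parityLin, LinearMap.comp_id]

lemma rightHit_mem_oddFiltration (u : Module.Dual k A) (ha : a ∈ S.oddFiltration m) :
    rightHit u a ∈ S.oddFiltration m := by
  induction m generalizing a u with
  | zero => rw [oddFiltration_zero, Submodule.mem_bot] at ha ⊢; rw [ha, map_zero]
  | succ m ih =>
    refine mem_oddFiltration_succ.2 fun g hg => ?_
    rw [rightHit_rightHit_of_mem_oddDual hg]
    exact ih _ (mem_oddFiltration_succ.1 ha g hg)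

lemma oddFiltration_le_succ (m : ℕ) : S.oddFiltration m ≤ S.oddFiltration (m + 1) :=
  fun _ ha => mem_oddFiltration_succ.2 fun g _ => rightHit_mem_oddFiltration g ha

lemma rightHit_mem_oddFiltration_of_forall_apply_eq_zero {n : ℕ} {u : Module.Dual k A}
    (hu : ∀ b ∈ S.oddFiltration n, u b = 0) (ha : a ∈ S.oddFiltration (m + n)) :
    rightHit u a ∈ S.oddFiltration m := by
  induction m generalizing a u with
  | zero =>
    rw [zero_add] at ha
    refine (Submodule.mem_bot k).2 (eq_of_forall_dual_apply_eq (k := k) fun h => ?_)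
    rw [apply_rightHit, ← apply_leftHit, hu _ (leftHit_mem_oddFiltration h ha), map_zero]
  | succ m ih =>
    refine mem_oddFiltration_succ.2 fun g hg => ?_
    rw [rightHit_rightHit_of_mem_oddDual hg]
    rw [add_right_comm] at ha
    exact ih (fun b hb => hu _ (parity_mem_oddFiltration hb)) (mem_oddFiltration_succ.1 ha g hg)

end NeZeroTwo

end OddFiltration

/-! ### Odd primitive elements -/

section PrimitivePart

variable {S : CocommSuperHopf k A} {a h : A}

lemma map_id_parity_comul (hh : h ∈ S.oddFiltration 1) :
    TensorProduct.map .id S.parityLin (comul (R := k) h) = comul h := by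
  refine (sub_eq_zero.1 (eq_zero_of_rightSlice_eq_zero fun f => ?_)).symm
  rw [map_sub, rightSlice_map, LinearMap.id_apply, ← LinearMap.sub_apply, ← map_sub]
  exact mem_oddFiltration_one.1 hh _ (S.sub_comp_parityLin_mem_oddDual f)

lemma parity_of_mem_oddFiltration_one (hh : h ∈ S.oddFiltration 1) : S.parity h = h := by
  have coact := congr_arg (leftSlice (counit (R := k))) (map_id_parity_comul hh)
  rwa [leftSlice_map, LinearMap.comp_id, ← leftHit_apply, leftHit_counit] at coact

lemma map_parity_id_comul (hh : h ∈ S.oddFiltration 1) :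
    TensorProduct.map S.parityLin .id (comul (R := k) h) = comul h := by
  calc TensorProduct.map S.parityLin .id (comul (R := k) h)
      = TensorProduct.map S.parityLin .id (TensorProduct.map .id S.parityLin (comul h)) := by
        rw [map_id_parity_comul hh]
    _ = comul (S.parity h) := by
        rw [TensorProduct.map_map, LinearMap.comp_id, LinearMap.id_comp, S.comul_parity]
    _ = comul h := by rw [parity_of_mem_oddFiltration_one hh]

lemma oddPart_of_mem_oddFiltration_one (hh : h ∈ S.oddFiltration 1) : S.oddPart h = 0 :=
  oddPart_of_parity_eq (parity_of_mem_oddFiltration_one hh)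

lemma map_id_oddPart_comul (hh : h ∈ S.oddFiltration 1) :
    TensorProduct.map .id S.oddPart (comul (R := k) h) = 0 :=
  eq_zero_of_rightSlice_eq_zero fun f => by
    rw [rightSlice_map]
    exact mem_oddFiltration_one.1 hh _ (S.comp_oddPart_mem_oddDual f)

lemma evenPart_mem_oddFiltration_one (ha : a ∈ S.oddFiltration 2) :
    S.evenPart a ∈ S.oddFiltration 1 := by
  refine mem_oddFiltration_one.2 fun g hg => ?_
  have hit_even := parity_of_mem_oddFiltration_one (mem_oddFiltration_succ.1 ha g hg)
  rw [evenPart_apply, map_smul, map_add, rightHit_parity_of_mem_oddDual hg, hit_even,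
    add_neg_cancel, smul_zero]

lemma convolution_congr_right {n : ℕ} {R : Type*} [Ring R] [Algebra k R]
    (p : A →ₗ[k] R) {q q' : A →ₗ[k] R} (hq : ∀ b ∈ S.oddFiltration n, q b = q' b)
    (ha : a ∈ S.oddFiltration n) : (p ⋆ q) a = (p ⋆ q') a :=
  eq_of_leftSlice_mem (T := comul a) (W := S.oddFiltration n)
    (Φ := LinearMap.mul' k R ∘ₗ TensorProduct.map p q)
    (Ψ := LinearMap.mul' k R ∘ₗ TensorProduct.map p q')
    (fun f => leftHit_mem_oddFiltration f ha) (fun b c hc => by simp [hq c hc])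

section NeZeroTwo

variable [NeZero (2 : k)]

lemma comm_comul (hh : h ∈ S.oddFiltration 1) :
    TensorProduct.comm k A A (comul h) = comul h := by
  have twisted := S.comul_comm h
  rw [← S.comul_parity, parity_of_mem_oddFiltration_one hh, map_id_parity_comul hh,
    map_parity_id_comul hh, add_sub_cancel_right, ← two_smul k] at twisted
  exact smul_right_injective _ two_ne_zero twisted

lemma comul_mul_of_map_id_parity
    (ha : TensorProduct.map .id S.parityLin (comul (R := k) a) = comul a) (b : A) :
    comul (R := k) (a * b) = comul a * comul b := by
  have twisted := S.comul_mul a b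
  rw [ha, add_right_comm, add_sub_cancel_right, ← two_smul k] at twisted
  exact smul_right_injective _ two_ne_zero twisted

lemma comul_mul_of_mem_oddFiltration_one (hh : h ∈ S.oddFiltration 1) (a : A) :
    comul (R := k) (a * h) = comul a * comul h := by
  have twisted := S.comul_mul a h
  rw [map_parity_id_comul hh, add_sub_cancel_right, ← two_smul k] at twisted
  exact smul_right_injective _ two_ne_zero twisted

/-- The second step of the filtration is the wedge of the first with itself: `Δ` maps it to
`F 1 ⊗ A + A ⊗ F 1`. -/
lemma apply_comul_eq_of_mem_oddFiltration_two {L : Type*} [AddCommGroup L] [Module k L]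
    {Φ Ψ : A ⊗[k] A →ₗ[k] L} (hleft : ∀ h ∈ S.oddFiltration 1, ∀ b, Φ (h ⊗ₜ b) = Ψ (h ⊗ₜ b))
    (hright : ∀ b, ∀ h ∈ S.oddFiltration 1, Φ (b ⊗ₜ h) = Ψ (b ⊗ₜ h))
    (ha : a ∈ S.oddFiltration 2) : Φ (comul a) = Ψ (comul a) := by
  have split : comul a = TensorProduct.map .id S.evenPart (comul a) +
      TensorProduct.map .id S.oddPart (comul (R := k) a) := by
    rw [← LinearMap.add_apply, ← TensorProduct.map_add_right, evenPart_add_oddPart,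
      TensorProduct.map_id, LinearMap.id_apply]
  rw [split, map_add, map_add]
  congr 1
  · refine eq_of_leftSlice_mem (W := S.oddFiltration 1) (fun f => ?_) hright
    rw [leftSlice_map]
    exact evenPart_mem_oddFiltration_one (leftHit_mem_oddFiltration _ ha)
  · refine eq_of_rightSlice_mem (W := S.oddFiltration 1) (fun f => ?_) hleft
    rw [rightSlice_map]
    exact mem_oddFiltration_succ.1 ha _ (S.comp_oddPart_mem_oddDual f)

lemma convolution_eq_of_mem_oddFiltration_two {R : Type*} [Ring R] [Algebra k R]
    {p p' q : A →ₗ[k] R} (hp : ∀ h ∈ S.oddFiltration 1, p h = p' h)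
    (hq : ∀ h ∈ S.oddFiltration 1, q h = 0) (ha : a ∈ S.oddFiltration 2) :
    (p ⋆ q) a = (p' ⋆ q) a :=
  apply_comul_eq_of_mem_oddFiltration_two (Φ := LinearMap.mul' k R ∘ₗ TensorProduct.map p q)
    (Ψ := LinearMap.mul' k R ∘ₗ TensorProduct.map p' q) (fun h hh b => by simp [hp h hh])
    (fun b h hh => by simp [hq h hh]) ha

end NeZeroTwo

/-- The map `χ ⋆ e₁`, with `e₁` the odd part. On `F 2` it is the projection onto the odd primitive
elements with kernel `F 1`. -/
noncomputable def primitivePart (S : CocommSuperHopf k A) : A →ₗ[k] A :=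
  S.antipode ⋆ S.oddPart

lemma id_convolution_primitivePart (S : CocommSuperHopf k A) :
    LinearMap.id ⋆ S.primitivePart = S.oddPart := by
  rw [primitivePart, ← convolution_assoc, S.id_convolution_antipode, convolutionOne_convolution]

lemma primitivePart_of_mem_oddFiltration_one (hh : h ∈ S.oddFiltration 1) :
    S.primitivePart h = 0 := by
  rw [primitivePart, convolution_apply, ← LinearMap.comp_id S.antipode,
    ← LinearMap.id_comp S.oddPart, ← TensorProduct.map_map, map_id_oddPart_comul hh, map_zero,
    map_zero]

lemma primitivePart_comp_parityLin (S : CocommSuperHopf k A) :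
    S.primitivePart ∘ₗ S.parityLin = S.parityLin ∘ₗ S.primitivePart := by
  rw [primitivePart, algHom_comp_convolution, ← S.comp_parityLin_convolution_comp_parityLin]
  congr 1
  · exact LinearMap.ext S.antipode_parity
  · ext a
    simp [oddPart_apply]

lemma map_comp_comul (p q : A →ₗ[k] A) : TensorProduct.map p q ∘ₗ comul =
    (Algebra.TensorProduct.includeLeft.toLinearMap ∘ₗ p) ⋆
      (Algebra.TensorProduct.includeRight.toLinearMap ∘ₗ q) := by
  ext a
  rw [convolution_apply, LinearMap.comp_apply]
  generalize comul (R := k) a = T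
  induction T using TensorProduct.induction_on with
  | zero => simp
  | tmul x y => simp
  | add T T' hT hT' => simp only [map_add, hT, hT']

/-- The component `(id ⊗ e₁) ∘ Δ` of the comultiplication. -/
noncomputable def oddComul (S : CocommSuperHopf k A) : A →ₗ[k] A ⊗[k] A :=
  TensorProduct.map .id S.oddPart ∘ₗ comul

lemma oddComul_of_mem_oddFiltration_one (hh : h ∈ S.oddFiltration 1) : S.oddComul h = 0 :=
  map_id_oddPart_comul hh

lemma oddComul_eq_comul_convolution (S : CocommSuperHopf k A) :
    S.oddComul = comul ⋆
      (Algebra.TensorProduct.includeRight.toLinearMap ∘ₗ S.primitivePart) := by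
  have comul_eq := map_comp_comul (k := k) (A := A) .id .id
  rw [TensorProduct.map_id, LinearMap.id_comp, LinearMap.comp_id, LinearMap.comp_id] at comul_eq
  rw [oddComul, map_comp_comul, ← id_convolution_primitivePart, algHom_comp_convolution,
    ← convolution_assoc, LinearMap.comp_id, LinearMap.comp_id, ← comul_eq]

lemma map_id_oddPart_apply (T : A ⊗[k] A) : TensorProduct.map .id S.oddPart T =
    (2⁻¹ : k) • (T - Algebra.TensorProduct.map (AlgHom.id k A) S.parity T) := by
  induction T using TensorProduct.induction_on with
  | zero => simp
  | tmul x y => simp [oddPart_apply, tmul_sub]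
  | add T T' hT hT' => rw [map_add, hT, hT', map_add, ← smul_add, add_sub_add_comm]

section NeZeroTwo

variable [NeZero (2 : k)]

lemma oddComul_mul (hh : h ∈ S.oddFiltration 1) (b : A) :
    S.oddComul (h * b) = comul h * S.oddComul b := by
  have invariant :
      Algebra.TensorProduct.map (AlgHom.id k A) S.parity (comul (R := k) h) = comul h :=
    map_id_parity_comul hh
  rw [oddComul, LinearMap.comp_apply, LinearMap.comp_apply,
    comul_mul_of_map_id_parity (map_id_parity_comul hh), map_id_oddPart_apply,
    map_id_oddPart_apply, map_mul, invariant, ← mul_sub, mul_smul_comm]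

lemma oddComul_eq_comul_convolution_oddComul (ha : a ∈ S.oddFiltration 2) :
    S.oddComul a = (comul ⋆ (S.oddComul ∘ₗ S.primitivePart)) a := by
  calc S.oddComul a = S.oddComul (S.oddPart a) := by
        conv_lhs => rw [← S.evenPart_apply_add_oddPart_apply a]
        rw [map_add, oddComul_of_mem_oddFiltration_one (evenPart_mem_oddFiltration_one ha),
          zero_add]
    _ = (S.oddComul ∘ₗ LinearMap.mul' k A ∘ₗ TensorProduct.map .id S.primitivePart)
          (comul a) := by
        rw [← id_convolution_primitivePart]
        rfl
    _ = (LinearMap.mul' k (A ⊗[k] A) ∘ₗ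
          TensorProduct.map comul (S.oddComul ∘ₗ S.primitivePart)) (comul a) :=
        apply_comul_eq_of_mem_oddFiltration_two (fun h hh b => by simp [oddComul_mul hh])
          (fun b h hh => by simp [primitivePart_of_mem_oddFiltration_one hh]) ha

lemma comul_antipode_convolution_comul (hh : h ∈ S.oddFiltration 1) :
    ((comul ∘ₗ S.antipode) ⋆ comul) h = convolutionOne k A (A ⊗[k] A) h := by
  calc ((comul ∘ₗ S.antipode) ⋆ comul) h
      = (comul ∘ₗ LinearMap.mul' k A ∘ₗ TensorProduct.map S.antipode .id) (comul h) :=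
        eq_of_leftSlice_mem (T := comul h) (W := S.oddFiltration 1)
          (Φ := LinearMap.mul' k (A ⊗[k] A) ∘ₗ TensorProduct.map (comul ∘ₗ S.antipode) comul)
          (fun f => leftHit_mem_oddFiltration f hh)
          (fun x y hy => by simp [comul_mul_of_mem_oddFiltration_one hy])
    _ = comul (R := k) ((S.antipode ⋆ .id) h) := rfl
    _ = convolutionOne k A (A ⊗[k] A) h := by
        rw [S.antipode_convolution_id, convolutionOne_apply, convolutionOne_apply, map_smul,
          S.comul_one, Algebra.TensorProduct.one_def]

lemma comul_antipode_convolution_comul_convolution {q : A →ₗ[k] A ⊗[k] A}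
    (hq : ∀ h ∈ S.oddFiltration 1, q h = 0) (ha : a ∈ S.oddFiltration 2) :
    ((comul ∘ₗ S.antipode) ⋆ (comul ⋆ q)) a = q a := by
  rw [← convolution_assoc, convolution_eq_of_mem_oddFiltration_two
    (fun h hh => comul_antipode_convolution_comul hh) hq ha, convolutionOne_convolution]

/-- Both sides are the unique solution `q` on `F 2` of `Δ ⋆ q = (id ⊗ e₁) ∘ Δ` that vanishes on
`F 1`. -/
lemma oddComul_primitivePart (ha : a ∈ S.oddFiltration 2) :
    S.oddComul (S.primitivePart a) = 1 ⊗ₜ S.primitivePart a := by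
  let q := S.oddComul ∘ₗ S.primitivePart
  let q' := (Algebra.TensorProduct.includeRight (R := k) (A := A)).toLinearMap ∘ₗ S.primitivePart
  have hq (h) (hh : h ∈ S.oddFiltration 1) : q h = 0 := by
    rw [LinearMap.comp_apply, primitivePart_of_mem_oddFiltration_one hh, map_zero]
  have hq' (h) (hh : h ∈ S.oddFiltration 1) : q' h = 0 := by
    rw [LinearMap.comp_apply, primitivePart_of_mem_oddFiltration_one hh, map_zero]
  calc q a = ((comul ∘ₗ S.antipode) ⋆ (comul ⋆ q)) a :=
        (comul_antipode_convolution_comul_convolution hq ha).symm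
    _ = ((comul ∘ₗ S.antipode) ⋆ (comul ⋆ q')) a :=
        convolution_congr_right _ (fun b hb => by
          rw [← oddComul_eq_comul_convolution, ← oddComul_eq_comul_convolution_oddComul hb]) ha
    _ = q' a := comul_antipode_convolution_comul_convolution hq' ha

end NeZeroTwo

end PrimitivePart

section OddPrimitive

/-- The odd primitive elements, i.e. the odd part of the Lie superalgebra of primitive elements. -/
def oddPrimitive (S : CocommSuperHopf k A) : Submodule k A where
  carrier := {x | S.parity x = -x ∧ comul (R := k) x = x ⊗ₜ 1 + 1 ⊗ₜ x}
  add_mem' {x y} hx hy := by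
    refine ⟨by rw [map_add, hx.1, hy.1, neg_add], ?_⟩
    rw [map_add, hx.2, hy.2, add_tmul, tmul_add, add_add_add_comm]
  zero_mem' := by simp
  smul_mem' c x hx := by
    refine ⟨by rw [map_smul, hx.1, smul_neg], ?_⟩
    rw [map_smul, hx.2, smul_add, smul_tmul', tmul_smul]

variable {S : CocommSuperHopf k A} {a h x y : A}

lemma counit_of_mem_oddPrimitive (hx : x ∈ S.oddPrimitive) : counit (R := k) x = 0 := by
  have hit := rightHit_counit (k := k) x
  rw [rightHit_apply, hx.2, map_add, rightSlice_tmul, rightSlice_tmul, S.counit_one, one_smul,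
    add_eq_left] at hit
  have counit_hit := congr_arg (counit (R := k)) hit
  rwa [map_smul, S.counit_one, map_zero, smul_eq_mul, mul_one] at counit_hit

lemma map_parity_id_comul_of_odd (hx : S.parity x = -x) :
    TensorProduct.map S.parityLin .id (comul (R := k) x) =
      -TensorProduct.map .id S.parityLin (comul x) := by
  have odd_comul := S.comul_parity x
  rw [hx, map_neg] at odd_comul
  calc TensorProduct.map S.parityLin .id (comul (R := k) x)
      = -TensorProduct.map S.parityLin .id
          (TensorProduct.map S.parityLin S.parityLin (comul (R := k) x)) := by
        rw [← odd_comul, map_neg, neg_neg]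
    _ = -TensorProduct.map .id S.parityLin (comul x) := by
        rw [TensorProduct.map_map, parityLin_comp_parityLin, LinearMap.id_comp]

section NeZeroTwo

variable [NeZero (2 : k)]

lemma comm_comul_of_odd (hx : S.parity x = -x) :
    TensorProduct.comm k A A (comul x) = comul x := by
  have twisted := S.comul_comm x
  rw [map_parity_id_comul_of_odd hx, neg_add_cancel_right, ← S.comul_parity, hx, map_neg,
    sub_neg_eq_add, ← two_smul k] at twisted
  exact smul_right_injective _ two_ne_zero twisted

lemma oddComul_add_comm_oddComul_of_odd (hx : S.parity x = -x) :
    S.oddComul x + TensorProduct.comm k A A (S.oddComul x) = comul x := by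
  have oddComul_eq :
      S.oddComul x = (2⁻¹ : k) • (comul x - TensorProduct.map .id S.parityLin (comul x)) :=
    map_id_oddPart_apply _
  rw [oddComul_eq, map_smul, map_sub, ← TensorProduct.map_comm, comm_comul_of_odd hx,
    map_parity_id_comul_of_odd hx, sub_neg_eq_add, ← smul_add, sub_add_add_cancel, ← two_smul k,
    inv_smul_smul₀ two_ne_zero]

lemma primitivePart_oddPart (ha : a ∈ S.oddFiltration 2) :
    S.primitivePart (S.oddPart a) = S.primitivePart a := by
  conv_rhs => rw [← S.evenPart_apply_add_oddPart_apply a, map_add,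
    primitivePart_of_mem_oddFiltration_one (evenPart_mem_oddFiltration_one ha), zero_add]

lemma parity_primitivePart (ha : a ∈ S.oddFiltration 2) :
    S.parity (S.primitivePart a) = -S.primitivePart a := by
  rw [← primitivePart_oddPart ha]
  calc S.parity (S.primitivePart (S.oddPart a)) = S.primitivePart (S.parity (S.oddPart a)) :=
        (LinearMap.congr_fun S.primitivePart_comp_parityLin _).symm
    _ = -S.primitivePart (S.oddPart a) := by rw [parity_oddPart, map_neg]

lemma primitivePart_mem_oddPrimitive (ha : a ∈ S.oddFiltration 2) :
    S.primitivePart a ∈ S.oddPrimitive :=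
  ⟨parity_primitivePart ha, by
    rw [← oddComul_add_comm_oddComul_of_odd (parity_primitivePart ha), oddComul_primitivePart ha,
      TensorProduct.comm_tmul, add_comm]⟩

lemma comul_mul_of_mem_oddPrimitive (hx : x ∈ S.oddPrimitive) (a : A) :
    comul (R := k) (a * x) = comul a * (1 ⊗ₜ x) +
      TensorProduct.map .id S.parityLin (comul a) * (x ⊗ₜ 1) := by
  have twisted := S.comul_mul a x
  simp only [hx.1, hx.2, map_add, TensorProduct.map_tmul, LinearMap.id_apply,
    AlgHom.toLinearMap_apply, map_one, neg_tmul] at twisted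
  refine smul_right_injective _ two_ne_zero (twisted.trans ?_)
  simp only [two_smul, mul_add, mul_neg]
  abel

lemma rightHit_mul (hx : x ∈ S.oddPrimitive) (g : Module.Dual k A) (b : A) :
    rightHit g (b * x) =
      rightHit (g ∘ₗ LinearMap.mulRight k x) b + rightHit (g ∘ₗ S.parityLin) b * x := by
  simp only [rightHit_apply, comul_mul_of_mem_oddPrimitive hx, map_add]
  generalize comul (R := k) b = T
  induction T using TensorProduct.induction_on with
  | zero => simp
  | tmul y z => simp
  | add T T' hT hT' =>
    simp only [map_add, add_mul] at hT hT' ⊢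
    rw [add_add_add_comm, hT, hT', add_add_add_comm]

lemma rightHit_mul_of_mem_oddDual {g : Module.Dual k A} (hg : g ∈ S.oddDual)
    (hx : x ∈ S.oddPrimitive) (b : A) :
    rightHit g (b * x) = rightHit (g ∘ₗ LinearMap.mulRight k x) b - rightHit g b * x := by
  rw [rightHit_mul hx, S.mem_oddDual.1 hg, map_neg, LinearMap.neg_apply, neg_mul, sub_eq_add_neg]

lemma primitivePart_mul (hh : h ∈ S.oddFiltration 1) (hx : x ∈ S.oddPrimitive) :
    S.primitivePart (h * x) = counit (R := k) h • x := by
  have term (z y) (hy : y ∈ S.oddFiltration 1) :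
      LinearMap.mul' k A (TensorProduct.map S.antipode S.oddPart
        ((z ⊗ₜ[k] y) * (x ⊗ₜ 1 + 1 ⊗ₜ x))) = S.antipode z * y * x := by
    have y_mul_x_odd : S.parity (y * x) = -(y * x) := by
      rw [map_mul, hx.1, parity_of_mem_oddFiltration_one hy, mul_neg]
    simp [mul_add, oddPart_of_mem_oddFiltration_one hy, oddPart_of_parity_eq_neg y_mul_x_odd,
      mul_assoc]
  calc S.primitivePart (h * x)
      = LinearMap.mul' k A (TensorProduct.map S.antipode S.oddPart
          (comul h * (x ⊗ₜ 1 + 1 ⊗ₜ x))) := by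
        rw [primitivePart, convolution_apply,
          comul_mul_of_map_id_parity (map_id_parity_comul hh), hx.2]
    _ = (S.antipode ⋆ .id) h * x :=
        eq_of_leftSlice_mem (T := comul h) (W := S.oddFiltration 1)
          (Φ := LinearMap.mul' k A ∘ₗ TensorProduct.map S.antipode S.oddPart ∘ₗ
            LinearMap.mulRight k (x ⊗ₜ 1 + 1 ⊗ₜ x))
          (Ψ := LinearMap.mulRight k x ∘ₗ LinearMap.mul' k A ∘ₗ TensorProduct.map S.antipode .id)
          (fun f => leftHit_mem_oddFiltration f hh) term
    _ = counit (R := k) h • x := by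
        rw [S.antipode_convolution_id, convolutionOne_apply, smul_mul_assoc, one_mul]

lemma comul_mul_add_mul (hx : x ∈ S.oddPrimitive) (hy : y ∈ S.oddPrimitive) :
    comul (R := k) (x * y + y * x) = (x * y + y * x) ⊗ₜ 1 + 1 ⊗ₜ (x * y + y * x) := by
  simp only [map_add, comul_mul_of_mem_oddPrimitive hx, comul_mul_of_mem_oddPrimitive hy, hx.2,
    hy.2, TensorProduct.map_tmul, LinearMap.id_apply, AlgHom.toLinearMap_apply, hx.1, hy.1,
    map_one, add_mul, Algebra.TensorProduct.tmul_mul_tmul, one_mul, mul_one, add_tmul, tmul_add,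
    tmul_neg, neg_mul]
  abel

end NeZeroTwo

lemma mul_add_mul_eq_zero_of_mem_oddPrimitive [CharZero k] [FiniteDimensional k A]
    (hx : x ∈ S.oddPrimitive) (hy : y ∈ S.oddPrimitive) : x * y + y * x = 0 := by
  have even : TensorProduct.map .id S.parityLin (comul (R := k) (x * y + y * x)) =
      comul (x * y + y * x) := by
    rw [comul_mul_add_mul hx hy]
    simp [hx.1, hy.1]
  refine eq_zero_of_comul_pow (k := k) (Algebra.IsIntegral.isIntegral _) fun n => ?_
  induction n with
  | zero => rw [pow_zero, pow_zero, S.comul_one, Algebra.TensorProduct.one_def]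
  | succ n ih =>
    rw [pow_succ', comul_mul_of_map_id_parity even, ih, comul_mul_add_mul hx hy, ← pow_succ']

end OddPrimitive

section EulerMap

open Module

variable [FiniteDimensional k A] (S : CocommSuperHopf k A)

/-- A basis of the space of odd primitive elements. -/
noncomputable def oddPrimitiveBasis : Basis (Fin (finrank k S.oddPrimitive)) k S.oddPrimitive :=
  finBasis k S.oddPrimitive

/-- The odd functionals `f` by which the operators `a ↦ f a₂ • a₁` contract against
`oddPrimitiveBasis`: coordinates of the primitive part, extended to `A`. -/
noncomputable def oddCoord (i : Fin (finrank k S.oddPrimitive)) : Dual k A :=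
  (LinearMap.exists_extend (S.oddPrimitiveBasis.coord i)).choose ∘ₗ S.primitivePart ∘ₗ S.oddPart

lemma oddCoord_mem_oddDual (i : Fin (finrank k S.oddPrimitive)) : S.oddCoord i ∈ S.oddDual :=
  S.comp_oddPart_mem_oddDual
    ((LinearMap.exists_extend (S.oddPrimitiveBasis.coord i)).choose ∘ₗ S.primitivePart)

variable {S}

lemma oddCoord_apply {a : A} {v : S.oddPrimitive} (hv : S.primitivePart (S.oddPart a) = v)
    (i : Fin (finrank k S.oddPrimitive)) :
    S.oddCoord i a = S.oddPrimitiveBasis.repr v i := by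
  have extend_apply := LinearMap.congr_fun
    (LinearMap.exists_extend (S.oddPrimitiveBasis.coord i)).choose_spec v
  rw [oddCoord, LinearMap.comp_apply, LinearMap.comp_apply, hv]
  exact extend_apply

section NeZeroTwo

variable [NeZero (2 : k)] {a h : A}

lemma sum_oddCoord_smul (ha : a ∈ S.oddFiltration 2) :
    ∑ j, S.oddCoord j a • (S.oddPrimitiveBasis j : A) = S.primitivePart a := by
  let v : S.oddPrimitive := ⟨_, primitivePart_mem_oddPrimitive ha⟩
  have sum_repr := congr_arg Subtype.val (S.oddPrimitiveBasis.sum_repr v)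
  simpa only [oddCoord_apply (v := v) (primitivePart_oddPart ha), AddSubmonoidClass.coe_finsetSum,
    Submodule.coe_smul] using sum_repr

lemma oddCoord_mul (hh : h ∈ S.oddFiltration 1) (i j : Fin (finrank k S.oddPrimitive)) :
    S.oddCoord j (h * S.oddPrimitiveBasis i) = if i = j then counit (R := k) h else 0 := by
  have odd : S.parity (h * S.oddPrimitiveBasis i) = -(h * S.oddPrimitiveBasis i) := by
    rw [map_mul, parity_of_mem_oddFiltration_one hh, (S.oddPrimitiveBasis i).2.1, mul_neg]
  have primitivePart_eq : S.primitivePart (S.oddPart (h * S.oddPrimitiveBasis i)) =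
      (counit (R := k) h • S.oddPrimitiveBasis i : S.oddPrimitive) := by
    rw [oddPart_of_parity_eq_neg odd, primitivePart_mul hh (S.oddPrimitiveBasis i).2,
      Submodule.coe_smul]
  rw [oddCoord_apply primitivePart_eq]
  simp [Finsupp.single_apply]

lemma rightHit_mul_add_mem_oddFiltration {m : ℕ} (ha : a ∈ S.oddFiltration (m + 1))
    (i j : Fin (finrank k S.oddPrimitive)) :
    rightHit (S.oddCoord j) (a * S.oddPrimitiveBasis i) +
      rightHit (S.oddCoord j) a * S.oddPrimitiveBasis i - (if i = j then a else 0) ∈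
        S.oddFiltration m := by
  rw [rightHit_mul_of_mem_oddDual (S.oddCoord_mem_oddDual j) (S.oddPrimitiveBasis i).2,
    sub_add_cancel]
  have eq_hit : rightHit (S.oddCoord j ∘ₗ LinearMap.mulRight k ↑(S.oddPrimitiveBasis i)) a -
      (if i = j then a else 0) = rightHit (S.oddCoord j ∘ₗ LinearMap.mulRight k
        ↑(S.oddPrimitiveBasis i) - if i = j then counit else 0) a := by
    rw [map_sub, LinearMap.sub_apply]
    split_ifs
    · rw [rightHit_counit]
    · rw [map_zero, LinearMap.zero_apply]
  rw [eq_hit]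
  refine rightHit_mem_oddFiltration_of_forall_apply_eq_zero (fun h hh => ?_) ha
  rw [LinearMap.sub_apply, LinearMap.comp_apply, LinearMap.mulRight_apply, oddCoord_mul hh,
    sub_eq_zero]
  split_ifs <;> rfl

end NeZeroTwo

variable (S) in
/-- The analogue `∑ xⱼ ∂ⱼ` of the Euler vector field, with `∂ⱼ` the contraction by
`oddCoord j`. -/
noncomputable def eulerMap : A →ₗ[k] A :=
  LinearMap.id ⋆ ∑ j, (S.oddCoord j).smulRight (S.oddPrimitiveBasis j : A)

variable (S) in
lemma eulerMap_apply (a : A) :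
    S.eulerMap a = ∑ j, rightHit (S.oddCoord j) a * S.oddPrimitiveBasis j := by
  rw [eulerMap, convolution_sum, LinearMap.sum_apply]
  exact Finset.sum_congr rfl fun j _ => convolution_smulRight ..

section NeZeroTwo

variable [NeZero (2 : k)] {a : A} {m : ℕ}

lemma eulerMap_of_mem_oddFiltration_two (ha : a ∈ S.oddFiltration 2) :
    S.eulerMap a = S.oddPart a := by
  rw [eulerMap, ← id_convolution_primitivePart]
  refine convolution_congr_right _ (fun b hb => ?_) ha
  simpa using sum_oddCoord_smul hb

lemma rightHit_eulerMap {g : Dual k A} (hg : g ∈ S.oddDual) (a : A) :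
    rightHit g (S.eulerMap a) = S.eulerMap (rightHit g a) + rightHit (g ∘ₗ S.eulerMap) a := by
  have comp_eulerMap : g ∘ₗ S.eulerMap =
      ∑ j, (g ∘ₗ LinearMap.mulRight k (S.oddPrimitiveBasis j : A)) ⋆ S.oddCoord j := by
    ext b
    simp [eulerMap_apply, ← apply_rightHit]
  have anticomm (j) : rightHit g (rightHit (S.oddCoord j) a) =
      -rightHit (S.oddCoord j) (rightHit g a) := by
    rw [rightHit_rightHit_of_mem_oddDual hg, S.mem_oddDual.1 (S.oddCoord_mem_oddDual j), map_neg,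
      LinearMap.neg_apply]
  rw [comp_eulerMap, eulerMap_apply, eulerMap_apply, map_sum, map_sum, LinearMap.sum_apply,
    ← Finset.sum_add_distrib]
  refine Finset.sum_congr rfl fun j _ => ?_
  rw [rightHit_mul_of_mem_oddDual hg (S.oddPrimitiveBasis j).2, anticomm, rightHit_rightHit,
    neg_mul, sub_neg_eq_add, add_comm]

lemma eulerMap_sub_smul_mem_oddFiltration (ha : a ∈ S.oddFiltration (m + 1)) :
    S.eulerMap a - (m : k) • a ∈ S.oddFiltration m := by
  induction m generalizing a with
  | zero =>
    rw [eulerMap_of_mem_oddFiltration_two (S.oddFiltration_le_succ 1 ha),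
      oddPart_of_mem_oddFiltration_one ha, Nat.cast_zero, zero_smul, sub_zero]
    exact zero_mem _
  | succ m ih =>
    refine mem_oddFiltration_succ.2 fun g hg => ?_
    have split : rightHit g (S.eulerMap a - ((m + 1 : ℕ) : k) • a) =
        (S.eulerMap (rightHit g a) - (m : k) • rightHit g a) +
          rightHit (g ∘ₗ S.eulerMap - g) a := by
      rw [map_sub, map_smul, rightHit_eulerMap hg, map_sub, LinearMap.sub_apply, Nat.cast_succ,
        add_smul, one_smul]
      abel
    rw [split]
    refine add_mem (ih (mem_oddFiltration_succ.1 ha g hg)) <|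
      rightHit_mem_oddFiltration_of_forall_apply_eq_zero (n := 2) (fun b hb => ?_) ha
    rw [LinearMap.sub_apply, LinearMap.comp_apply, eulerMap_of_mem_oddFiltration_two hb,
      apply_oddPart_of_mem_oddDual hg, sub_self]

end NeZeroTwo

variable (S) in
/-- The Koszul data of the odd primitive elements with the filtration by odd hits. -/
noncomputable def koszulData [CharZero k] : KoszulData k A (Fin (finrank k S.oddPrimitive)) where
  x j := S.oddPrimitiveBasis j
  x_mul_x_add i j := mul_add_mul_eq_zero_of_mem_oddPrimitive
    (S.oddPrimitiveBasis i).2 (S.oddPrimitiveBasis j).2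
  contract j := rightHit (S.oddCoord j)
  F := S.oddFiltration
  F_zero := oddFiltration_zero
  exists_F_eq_top := S.exists_oddFiltration_eq_top
  contract_mul_x i j _ _ ha := rightHit_mul_add_mem_oddFiltration ha i j
  euler _ a ha := S.eulerMap_apply a ▸ eulerMap_sub_smul_mem_oddFiltration ha

end EulerMap

section Integral

open Module

variable {S : CocommSuperHopf k A} {a h : A}

variable (S) in
lemma parity_traceElement [FiniteDimensional k A] :
    S.parity (traceElement k A) = traceElement k A := by
  refine eq_of_forall_dual_apply_eq (k := k) fun f => ?_
  have rightHit_comp : rightHit (f ∘ₗ S.parityLin) = S.parityLin * rightHit f * S.parityLin := by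
    ext a
    simp [rightHit_parity, parity_parity]
  have parity_sq : S.parityLin * S.parityLin = 1 := S.parityLin_comp_parityLin
  calc f (S.parity (traceElement k A))
      = LinearMap.trace k A (rightHit (f ∘ₗ S.parityLin)) :=
        apply_traceElement k (f ∘ₗ S.parityLin)
    _ = LinearMap.trace k A (rightHit f) := by
        rw [rightHit_comp, LinearMap.trace_mul_comm, ← mul_assoc, parity_sq, one_mul]
    _ = f (traceElement k A) := (apply_traceElement k f).symm

section NeZeroTwo

variable [NeZero (2 : k)]

lemma rightHit_mul_of_mem_oddFiltration_one (f : Dual k A) (hh : h ∈ S.oddFiltration 1) :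
    rightHit f * Algebra.lmul k A h =
      ((Algebra.lmul k A).toLinearMap ⋆ (rightHit ∘ₗ (LinearMap.mul k A).compr₂ f)) h := by
  ext a
  have slice_tmul_mul (c d : A) (T : A ⊗[k] A) : rightSlice f ((c ⊗ₜ d) * T) =
      c * rightSlice ((LinearMap.mul k A).compr₂ f d) T := by
    induction T using TensorProduct.induction_on with
    | zero => simp
    | tmul y z => simp
    | add T T' hT hT' => simp only [mul_add, map_add, hT, hT']
  rw [Module.End.mul_apply, Algebra.coe_lmul_eq_mul, LinearMap.mul_apply', rightHit_apply,
    comul_mul_of_map_id_parity (map_id_parity_comul hh), convolution_apply]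
  generalize comul (R := k) h = U
  induction U using TensorProduct.induction_on with
  | zero => simp
  | tmul c d => simp [slice_tmul_mul, rightHit_apply]
  | add U U' hU hU' => simp only [add_mul, map_add, LinearMap.add_apply, hU, hU']

lemma rightHit_comp_mulLeft (f : Dual k A) (hh : h ∈ S.oddFiltration 1) :
    rightHit (f ∘ₗ LinearMap.mulLeft k h) =
      (((Algebra.lmul k A).toLinearMap ∘ₗ S.antipode) ⋆
        (LinearMap.mulLeft k (rightHit f) ∘ₗ (Algebra.lmul k A).toLinearMap)) h := by
  have antipode_left : ((Algebra.lmul k A).toLinearMap ∘ₗ S.antipode) ⋆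
      (Algebra.lmul k A).toLinearMap = convolutionOne k A (End k A) := by
    rw [← algHom_comp_convolutionOne (Algebra.lmul k A), ← S.antipode_convolution_id,
      algHom_comp_convolution, LinearMap.comp_id]
  rw [convolution_congr_right _ (fun d hd => rightHit_mul_of_mem_oddFiltration_one f hd) hh,
    ← convolution_assoc, antipode_left, convolutionOne_convolution]
  rfl

variable [FiniteDimensional k A]

lemma mul_traceElement (hh : h ∈ S.oddFiltration 1) :
    h * traceElement k A = counit (R := k) h • traceElement k A := by
  refine eq_of_forall_dual_apply_eq (k := k) fun f => ?_
  let L := (Algebra.lmul k A).toLinearMap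
  have trace_cyclic (T : A ⊗[k] A) :
      LinearMap.trace k A (LinearMap.mul' k (End k A) (TensorProduct.map (L ∘ₗ S.antipode)
        (LinearMap.mulLeft k (rightHit f) ∘ₗ L) T)) =
      LinearMap.trace k A (rightHit f * LinearMap.mul' k (End k A)
        (TensorProduct.map L (L ∘ₗ S.antipode) (TensorProduct.comm k A A T))) := by
    induction T using TensorProduct.induction_on with
    | zero => simp
    | tmul c d => simpa [mul_assoc] using LinearMap.trace_mul_comm k _ (rightHit f * L d)
    | add T T' hT hT' => simp only [map_add, mul_add, hT, hT']
  have antipode_right : L ⋆ (L ∘ₗ S.antipode) = convolutionOne k A (End k A) := by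
    rw [← algHom_comp_convolutionOne (Algebra.lmul k A), ← S.id_convolution_antipode,
      algHom_comp_convolution, LinearMap.comp_id]
  calc f (h * traceElement k A)
      = LinearMap.trace k A (rightHit (f ∘ₗ LinearMap.mulLeft k h)) :=
        apply_traceElement k (f ∘ₗ LinearMap.mulLeft k h)
    _ = LinearMap.trace k A (rightHit f * (L ⋆ (L ∘ₗ S.antipode)) h) := by
        rw [rightHit_comp_mulLeft f hh, convolution_apply, trace_cyclic, comm_comul hh,
          convolution_apply]
    _ = f (counit (R := k) h • traceElement k A) := by
        rw [antipode_right, convolutionOne_apply, mul_smul_comm, mul_one, map_smul, map_smul,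
          apply_traceElement]

end NeZeroTwo

section CharZero

variable [CharZero k] [FiniteDimensional k A]

variable (S) in
lemma parity_koszulData_x (j : Fin (finrank k S.oddPrimitive)) :
    S.parity (S.koszulData.x j) = -S.koszulData.x j :=
  (S.oddPrimitiveBasis j).2.1

lemma parity_mem_span (ha : a ∈ Submodule.span A (Set.range S.koszulData.x)) :
    S.parity a ∈ Submodule.span A (Set.range S.koszulData.x) := by
  induction ha using Submodule.span_induction with
  | mem x hx =>
    obtain ⟨j, rfl⟩ := hx
    rw [parity_koszulData_x]
    exact neg_mem (Submodule.subset_span ⟨j, rfl⟩)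
  | zero => rw [map_zero]; exact zero_mem _
  | add y z _ _ hy hz => rw [map_add]; exact add_mem hy hz
  | smul c y _ hy => rw [smul_eq_mul, map_mul]; exact Submodule.smul_mem _ _ hy

variable (S) in
lemma exists_mem_oddFiltration_one_add_mem_span (a : A) : ∃ h ∈ S.oddFiltration 1,
    ∃ b ∈ Submodule.span A (Set.range S.koszulData.x), h + b = a := by
  obtain ⟨m, top_eq⟩ := S.koszulData.exists_F_eq_top
  exact Submodule.mem_sup.1 (S.koszulData.F_le_F_one_sup_span m (top_eq ▸ Submodule.mem_top))

lemma mem_span_of_odd (ha : S.parity a = -a) :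
    a ∈ Submodule.span A (Set.range S.koszulData.x) := by
  obtain ⟨h, hh, b, hb, rfl⟩ := S.exists_mem_oddFiltration_one_add_mem_span a
  rw [← oddPart_of_parity_eq_neg ha, map_add, oddPart_of_mem_oddFiltration_one hh, zero_add,
    oddPart_apply]
  exact Submodule.smul_of_tower_mem _ _ (sub_mem hb (parity_mem_span hb))

lemma counit_of_mem_span (ha : a ∈ Submodule.span A (Set.range S.koszulData.x)) :
    counit (R := k) a = 0 := by
  induction ha using Submodule.span_induction with
  | mem x hx =>
    obtain ⟨j, rfl⟩ := hx
    exact counit_of_mem_oddPrimitive (S.oddPrimitiveBasis j).2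
  | zero => exact map_zero _
  | add y z _ _ hy hz => rw [map_add, hy, hz, add_zero]
  | smul c y _ hy => rw [smul_eq_mul, S.counit_mul, hy, mul_zero]

lemma mul_traceElement_mem_span (ha : a ∈ Submodule.span A (Set.range S.koszulData.x)) :
    a * traceElement k A ∈ Submodule.span A (Set.range S.koszulData.x) := by
  induction ha using Submodule.span_induction with
  | mem x hx =>
    obtain ⟨j, rfl⟩ := hx
    refine mem_span_of_odd ?_
    rw [map_mul, parity_traceElement, parity_koszulData_x, neg_mul]
  | zero => rw [zero_mul]; exact zero_mem _
  | add y z _ _ hy hz => rw [add_mul]; exact add_mem hy hz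
  | smul c y _ hy => rw [smul_eq_mul, mul_assoc]; exact Submodule.smul_mem _ _ hy

variable (S) in
lemma mul_traceElement_sub_mem_span (a : A) :
    a * traceElement k A - counit (R := k) a • traceElement k A ∈
      Submodule.span A (Set.range S.koszulData.x) := by
  obtain ⟨h, hh, b, hb, rfl⟩ := S.exists_mem_oddFiltration_one_add_mem_span a
  rw [add_mul, mul_traceElement hh, map_add, counit_of_mem_span hb, add_zero, add_sub_cancel_left]
  exact mul_traceElement_mem_span hb

variable (S) in
/-- The normalised trace element is an integral modulo the left ideal of the odd primitives. -/
lemma exists_counit_eq_one_mul_sub_mem_span : ∃ t : A, counit (R := k) t = 1 ∧ ∀ a : A,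
    a * t - counit (R := k) a • t ∈ Submodule.span A (Set.range S.koszulData.x) := by
  have one_ne_zero : (1 : A) ≠ 0 := fun one_eq_zero =>
    _root_.one_ne_zero (α := k) (by rw [← S.counit_one, one_eq_zero, map_zero])
  have : Nontrivial A := nontrivial_of_ne _ _ one_ne_zero
  have finrank_ne_zero : (finrank k A : k) ≠ 0 := Nat.cast_ne_zero.2 finrank_pos.ne'
  refine ⟨(finrank k A : k)⁻¹ • traceElement k A, ?_, fun a => ?_⟩
  · rw [map_smul, counit_traceElement, smul_eq_mul, inv_mul_cancel₀ finrank_ne_zero]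
  · rw [mul_smul_comm, smul_comm, ← smul_sub]
    exact Submodule.smul_of_tower_mem _ _ (S.mul_traceElement_sub_mem_span a)

end CharZero

end Integral

end CocommSuperHopf

/-! ### From graded to ungraded sign rules -/

lemma two_mul_neg_one_pow_mul (i j : ZMod 2) :
    2 * (((-1 : ℤˣ) ^ (i * j) : ℤˣ) : ℤ) =
      1 + ((-1 : ℤˣ) ^ i : ℤˣ) + ((-1 : ℤˣ) ^ j : ℤˣ) -
        ((-1 : ℤˣ) ^ i : ℤˣ) * ((-1 : ℤˣ) ^ j : ℤˣ) := by
  decide +revert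

section GradedParity

variable {k A : Type*} [CommRing k] [Ring A] [Algebra k A]
  (𝒜 : ZMod 2 → Submodule k A) [GradedAlgebra 𝒜]

/-- The parity involution `a ↦ (-1)^{|a|} a` of a `ℤ/2`-graded algebra, as a linear map. -/
noncomputable def gradedParityLinearMap : A →ₗ[k] A :=
  DirectSum.toModule k (ZMod 2) A (fun i => (((-1 : ℤˣ) ^ i : ℤˣ) : ℤ) • (𝒜 i).subtype) ∘ₗ
    (DirectSum.decomposeLinearEquiv 𝒜).toLinearMap

lemma gradedParityLinearMap_of_mem {i : ZMod 2} {a : A} (ha : a ∈ 𝒜 i) :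
    gradedParityLinearMap 𝒜 a = (((-1 : ℤˣ) ^ i : ℤˣ) : ℤ) • a := by
  rw [gradedParityLinearMap, LinearMap.comp_apply, LinearEquiv.coe_coe,
    DirectSum.decomposeLinearEquiv_apply, DirectSum.decompose_of_mem 𝒜 ha]
  exact DirectSum.toModule_lof ..

/-- The parity involution `a ↦ (-1)^{|a|} a` of a `ℤ/2`-graded algebra. -/
noncomputable def gradedParity : A →ₐ[k] A :=
  AlgHom.ofLinearMap (gradedParityLinearMap 𝒜)
    (by rw [gradedParityLinearMap_of_mem 𝒜 (SetLike.one_mem_graded 𝒜), uzpow_zero, Units.val_one,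
      one_smul])
    (fun a b => by
      induction a using DirectSum.Decomposition.inductionOn 𝒜 with
      | zero => rw [zero_mul, map_zero, zero_mul]
      | add a a' ha ha' => rw [add_mul, map_add, map_add, add_mul, ha, ha']
      | @homogeneous i a =>
        induction b using DirectSum.Decomposition.inductionOn 𝒜 with
        | zero => rw [mul_zero, map_zero, mul_zero]
        | add b b' hb hb' => rw [mul_add, map_add, map_add, mul_add, hb, hb']
        | @homogeneous j b =>
          rw [gradedParityLinearMap_of_mem 𝒜 a.2, gradedParityLinearMap_of_mem 𝒜 b.2,
            gradedParityLinearMap_of_mem 𝒜 (SetLike.mul_mem_graded a.2 b.2), uzpow_add,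
            Units.val_mul, smul_mul_smul_comm])

variable {𝒜}

lemma gradedParity_of_mem {i : ZMod 2} {a : A} (ha : a ∈ 𝒜 i) :
    gradedParity 𝒜 a = (((-1 : ℤˣ) ^ i : ℤˣ) : ℤ) • a :=
  gradedParityLinearMap_of_mem 𝒜 ha

lemma gradedParity_gradedParity (a : A) : gradedParity 𝒜 (gradedParity 𝒜 a) = a := by
  induction a using DirectSum.Decomposition.inductionOn 𝒜 with
  | zero => rw [map_zero, map_zero]
  | add a b ha hb => rw [map_add, map_add, ha, hb]
  | homogeneous a =>
    rw [gradedParity_of_mem a.2, map_zsmul, gradedParity_of_mem a.2, smul_smul, ← Units.val_mul,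
      Int.units_mul_self, Units.val_one, one_smul]

lemma apply_gradedParity_of_degree_preserving {f : A →ₗ[k] A}
    (hf : ∀ i, ∀ a ∈ 𝒜 i, f a ∈ 𝒜 i) (a : A) :
    f (gradedParity 𝒜 a) = gradedParity 𝒜 (f a) := by
  induction a using DirectSum.Decomposition.inductionOn 𝒜 with
  | zero => simp only [map_zero]
  | add a b ha hb => simp only [map_add, ha, hb]
  | homogeneous a =>
    rw [gradedParity_of_mem a.2, gradedParity_of_mem (hf _ _ a.2), map_zsmul]

variable (𝒜) in
@[elab_as_elim]
lemma homogeneous_tmul_induction {P : A ⊗[k] A → Prop} (zero : P 0)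
    (tmul : ∀ i j, ∀ a ∈ 𝒜 i, ∀ b ∈ 𝒜 j, P (a ⊗ₜ b))
    (add : ∀ u v, P u → P v → P (u + v)) (u : A ⊗[k] A) : P u := by
  induction u with
  | zero => exact zero
  | add u v hu hv => exact add u v hu hv
  | tmul a b =>
    induction a using DirectSum.Decomposition.inductionOn 𝒜 with
    | zero => rwa [zero_tmul]
    | add a a' ha ha' => rw [add_tmul]; exact add _ _ ha ha'
    | homogeneous a =>
      induction b using DirectSum.Decomposition.inductionOn 𝒜 with
      | zero => rwa [tmul_zero]
      | add b b' hb hb' => rw [tmul_add]; exact add _ _ hb hb'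
      | homogeneous b => exact tmul _ _ a a.2 b b.2

lemma two_smul_graded_mul (u v : A ⊗[k] A) :
    (2 : k) • (GradedTensorProduct.of k 𝒜 𝒜).symm
        (GradedTensorProduct.of k 𝒜 𝒜 u * GradedTensorProduct.of k 𝒜 𝒜 v) =
      u * v + u * TensorProduct.map (gradedParity 𝒜).toLinearMap .id v +
        TensorProduct.map .id (gradedParity 𝒜).toLinearMap u * v -
        TensorProduct.map .id (gradedParity 𝒜).toLinearMap u *
          TensorProduct.map (gradedParity 𝒜).toLinearMap .id v := by
  induction u using homogeneous_tmul_induction 𝒜 with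
  | zero => simp only [map_zero, zero_mul, smul_zero, add_zero, sub_zero]
  | add u u' hu hu' => simp only [map_add, add_mul, smul_add, hu, hu']; abel
  | tmul _ j a _ b hb =>
    induction v using homogeneous_tmul_induction 𝒜 with
    | zero => simp only [map_zero, mul_zero, smul_zero, add_zero, sub_zero]
    | add v v' hv hv' => simp only [map_add, mul_add, smul_add, hv, hv']; abel
    | tmul i' _ c hc d _ =>
      have graded_mul : (GradedTensorProduct.of k 𝒜 𝒜).symm
          (GradedTensorProduct.of k 𝒜 𝒜 (a ⊗ₜ b) * GradedTensorProduct.of k 𝒜 𝒜 (c ⊗ₜ d)) =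
          (((-1 : ℤˣ) ^ (j * i') : ℤˣ) : ℤ) • ((a * c) ⊗ₜ[k] (b * d)) :=
        GradedTensorProduct.tmul_coe_mul_coe_tmul 𝒜 𝒜 a ⟨b, hb⟩ ⟨c, hc⟩ d
      rw [graded_mul, two_smul, ← two_smul ℤ, smul_smul, two_mul_neg_one_pow_mul]
      simp only [TensorProduct.map_tmul, AlgHom.toLinearMap_apply, LinearMap.id_apply,
        gradedParity_of_mem hb, gradedParity_of_mem hc, tmul_smul, ← smul_tmul', smul_mul_assoc,
        mul_smul_comm, Algebra.TensorProduct.tmul_mul_tmul]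
      module

lemma two_smul_graded_comm (u : A ⊗[k] A) :
    (2 : k) • (GradedTensorProduct.of k 𝒜 𝒜).symm
        (GradedTensorProduct.comm 𝒜 𝒜 (GradedTensorProduct.of k 𝒜 𝒜 u)) =
      TensorProduct.comm k A A (u + TensorProduct.map (gradedParity 𝒜).toLinearMap .id u +
        TensorProduct.map .id (gradedParity 𝒜).toLinearMap u -
        TensorProduct.map (gradedParity 𝒜).toLinearMap (gradedParity 𝒜).toLinearMap u) := by
  induction u using homogeneous_tmul_induction 𝒜 with
  | zero => simp only [map_zero, smul_zero, add_zero, sub_zero]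
  | add u v hu hv => simp only [map_add, map_sub, smul_add] at hu hv ⊢; rw [hu, hv]; abel
  | tmul i j a ha b hb =>
    have graded_comm : (GradedTensorProduct.of k 𝒜 𝒜).symm
        (GradedTensorProduct.comm 𝒜 𝒜 (GradedTensorProduct.of k 𝒜 𝒜 (a ⊗ₜ b))) =
        (((-1 : ℤˣ) ^ (j * i) : ℤˣ) : ℤ) • (b ⊗ₜ[k] a) :=
      GradedTensorProduct.comm_coe_tmul_coe 𝒜 𝒜 ⟨a, ha⟩ ⟨b, hb⟩
    rw [graded_comm, two_smul, ← two_smul ℤ, smul_smul, two_mul_neg_one_pow_mul]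
    simp only [TensorProduct.map_tmul, AlgHom.toLinearMap_apply, LinearMap.id_apply,
      gradedParity_of_mem ha, gradedParity_of_mem hb, tmul_smul, ← smul_tmul', map_add, map_sub,
      map_zsmul, TensorProduct.comm_tmul]
    module

end GradedParity

section Bridge

variable {k A : Type} [Field k] [Ring A] [Algebra k A] {𝒜 : ZMod 2 → Submodule k A}
  [GradedAlgebra 𝒜]

lemma map_gradedParity_of_mem_tensorGrade {i : ZMod 2} {u : A ⊗[k] A}
    (hu : u ∈ tensorGrade k A 𝒜 i) :
    TensorProduct.map (gradedParity 𝒜).toLinearMap (gradedParity 𝒜).toLinearMap u =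
      (((-1 : ℤˣ) ^ i : ℤˣ) : ℤ) • u := by
  suffices tensorGrade k A 𝒜 i ≤ LinearMap.eqLocus (TensorProduct.map
      (gradedParity 𝒜).toLinearMap (gradedParity 𝒜).toLinearMap)
      ((((-1 : ℤˣ) ^ i : ℤˣ) : ℤ) • LinearMap.id) from this hu
  refine iSup₂_le ?_
  rintro ⟨p, q⟩ rfl _ ⟨w, rfl⟩
  induction w with
  | zero => rw [map_zero]; exact zero_mem _
  | add w w' hw hw' => rw [map_add]; exact add_mem hw hw'
  | tmul a b =>
    rw [LinearMap.mem_eqLocus, TensorProduct.map_tmul, TensorProduct.map_tmul,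
      AlgHom.toLinearMap_apply, AlgHom.toLinearMap_apply, Submodule.subtype_apply,
      Submodule.subtype_apply, gradedParity_of_mem a.2, gradedParity_of_mem b.2, tmul_smul,
      ← smul_tmul', smul_smul, mul_comm, uzpow_add, Units.val_mul]
    rfl

namespace IsHopfSuperalgebra

variable {comul : A →ₐ[k] (𝒜 ᵍ⊗[k] 𝒜)} {counit : A →ₐ[k] k} {antipode : A →ₗ[k] A}

/-- The coalgebra underlying a Hopf superalgebra; it involves no signs. -/
@[reducible] noncomputable def coalgebra
    (hHopf : IsHopfSuperalgebra k A 𝒜 comul counit antipode) : Coalgebra k A where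
  comul := comulLin k A 𝒜 comul
  counit := counit.toLinearMap
  coassoc := LinearMap.ext fun a =>
    (LinearEquiv.eq_symm_apply _).1 (LinearMap.congr_fun hHopf.coassoc a)
  rTensor_counit_comp_comul := LinearMap.ext fun a =>
    (TensorProduct.lid k A).eq_symm_apply.2 (LinearMap.congr_fun hHopf.counit_left a)
  lTensor_counit_comp_comul := LinearMap.ext fun a =>
    (TensorProduct.rid k A).eq_symm_apply.2 (LinearMap.congr_fun hHopf.counit_right a)

lemma comulLin_gradedParity (hHopf : IsHopfSuperalgebra k A 𝒜 comul counit antipode) (a : A) :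
    comulLin k A 𝒜 comul (gradedParity 𝒜 a) =
      TensorProduct.map (gradedParity 𝒜).toLinearMap (gradedParity 𝒜).toLinearMap
        (comulLin k A 𝒜 comul a) := by
  induction a using DirectSum.Decomposition.inductionOn 𝒜 with
  | zero => simp only [map_zero]
  | add a b ha hb => simp only [map_add, ha, hb]
  | homogeneous a =>
    rw [gradedParity_of_mem a.2, map_zsmul,
      map_gradedParity_of_mem_tensorGrade (hHopf.comul_parity _ _ a.2)]

lemma two_smul_comulLin_mul (a b : A) :
    (2 : k) • comulLin k A 𝒜 comul (a * b) =
      comulLin k A 𝒜 comul a * comulLin k A 𝒜 comul b +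
        comulLin k A 𝒜 comul a *
          TensorProduct.map (gradedParity 𝒜).toLinearMap .id (comulLin k A 𝒜 comul b) +
        TensorProduct.map .id (gradedParity 𝒜).toLinearMap (comulLin k A 𝒜 comul a) *
          comulLin k A 𝒜 comul b -
        TensorProduct.map .id (gradedParity 𝒜).toLinearMap (comulLin k A 𝒜 comul a) *
          TensorProduct.map (gradedParity 𝒜).toLinearMap .id (comulLin k A 𝒜 comul b) := by
  rw [← two_smul_graded_mul, comulLin, LinearMap.comp_apply, AlgHom.toLinearMap_apply, map_mul]
  rfl

lemma two_smul_comm_comulLin (hHopf : IsHopfSuperalgebra k A 𝒜 comul counit antipode) (a : A) :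
    (2 : k) • TensorProduct.comm k A A (comulLin k A 𝒜 comul a) =
      comulLin k A 𝒜 comul a +
        TensorProduct.map (gradedParity 𝒜).toLinearMap .id (comulLin k A 𝒜 comul a) +
        TensorProduct.map .id (gradedParity 𝒜).toLinearMap (comulLin k A 𝒜 comul a) -
        TensorProduct.map (gradedParity 𝒜).toLinearMap (gradedParity 𝒜).toLinearMap
          (comulLin k A 𝒜 comul a) := by
  have graded_comm : GradedTensorProduct.comm 𝒜 𝒜 (GradedTensorProduct.of k 𝒜 𝒜
      (comulLin k A 𝒜 comul a)) = comul a := hHopf.cocomm a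
  have two_smul_comul := two_smul_graded_comm (𝒜 := 𝒜) (comulLin k A 𝒜 comul a)
  rw [graded_comm] at two_smul_comul
  rw [← map_smul, ← (TensorProduct.comm k A A).eq_symm_apply]
  exact two_smul_comul

/-- A cocommutative Hopf superalgebra, with its grading encoded by the parity involution. -/
noncomputable def cocommSuperHopf (hHopf : IsHopfSuperalgebra k A 𝒜 comul counit antipode) :
    @CocommSuperHopf k A _ _ _ hHopf.coalgebra :=
  letI := hHopf.coalgebra
  { parity := gradedParity 𝒜
    antipode := antipode
    parity_parity := gradedParity_gradedParity
    antipode_parity := apply_gradedParity_of_degree_preserving hHopf.antipode_parity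
    counit_one := map_one counit
    counit_mul := map_mul counit
    comul_one := map_one comul
    comul_parity := hHopf.comulLin_gradedParity
    comul_mul := two_smul_comulLin_mul
    comul_comm := hHopf.two_smul_comm_comulLin
    antipode_convolution_id := hHopf.antipode_left
    id_convolution_antipode := hHopf.antipode_right }

end IsHopfSuperalgebra

end Bridge

open Abelian in
theorem statement1_general (k : Type) [Field k] [CharZero k]
    (A : Type) [Ring A] [Algebra k A] [FiniteDimensional k A]
    (𝒜 : ZMod 2 → Submodule k A) [GradedAlgebra 𝒜]
    (comul : A →ₐ[k] (𝒜 ᵍ⊗[k] 𝒜)) (counit : A →ₐ[k] k) (antipode : A →ₗ[k] A)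
    (hHopf : IsHopfSuperalgebra k A 𝒜 comul counit antipode) :
    (∃ S : Finset (Σ N : ℕ, Ext (trivCat k A counit) (trivCat k A counit) N),
      ∀ (N : ℕ) (x : Ext (trivCat k A counit) (trivCat k A counit) N),
        ExtAlgGen (k := k) (trivCat k A counit)
          (fun N' => {y | (⟨N', y⟩ : Σ N'' : ℕ, Ext (trivCat k A counit)
            (trivCat k A counit) N'') ∈ S}) N x) ∧
    (∀ (M : Type) [AddCommGroup M] [Module A M] [Module k M] [IsScalarTower k A M]
        [FiniteDimensional k M],
      ∃ T : Finset (Σ N : ℕ, Ext (trivCat k A counit) (ModuleCat.of A M) N),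
        ∀ (N : ℕ) (x : Ext (trivCat k A counit) (ModuleCat.of A M) N),
          ExtModGen (k := k) (trivCat k A counit) (ModuleCat.of A M)
            (fun N' => {y | (⟨N', y⟩ : Σ N'' : ℕ, Ext (trivCat k A counit)
              (ModuleCat.of A M) N'') ∈ T}) N x) := by
  let := hHopf.coalgebra
  let S := hHopf.cocommSuperHopf
  have counit_x (j) : counit (S.koszulData.x j) = 0 :=
    CocommSuperHopf.counit_of_mem_oddPrimitive (S.oddPrimitiveBasis j).2
  obtain ⟨t, counit_t, mul_t⟩ := S.exists_counit_eq_one_mul_sub_mem_span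
  exact ⟨S.koszulData.exists_finset_extAlgGen counit_x counit_t mul_t,
    fun M => S.koszulData.exists_finset_extModGen counit_x counit_t mul_t M⟩

open Abelian in
/-- Let `k` be a field of characteristic `0` and let `A` be a
finite-dimensional cocommutative Hopf superalgebra over `k`.  Then the cohomology ring
`H^•(A,k) = Ext^•_A(k,k)` is a finitely generated `k`-algebra, and for every
finite-dimensional `ℤ/2`-graded `A`-module `M` the cohomology `H^•(A,M) = Ext^•_A(k,M)` is a
finitely generated module over `H^•(A,k)`. -/
theorem statement1 (k : Type) [Field k] [CharZero k]
    (A : Type) [Ring A] [Algebra k A] [FiniteDimensional k A]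
    (𝒜 : ZMod 2 → Submodule k A) [GradedAlgebra 𝒜]
    (comul : A →ₐ[k] (𝒜 ᵍ⊗[k] 𝒜)) (counit : A →ₐ[k] k) (antipode : A →ₗ[k] A)
    (hHopf : IsHopfSuperalgebra k A 𝒜 comul counit antipode) :
    -- `H^•(A,k)` is a finitely generated `k`-algebra
    (∃ S : Finset (Σ N : ℕ, Ext (trivCat k A counit) (trivCat k A counit) N),
      ∀ (N : ℕ) (x : Ext (trivCat k A counit) (trivCat k A counit) N),
        ExtAlgGen (k := k) (trivCat k A counit)
          (fun N' => {y | (⟨N', y⟩ : Σ N'' : ℕ, Ext (trivCat k A counit)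
            (trivCat k A counit) N'') ∈ S}) N x) ∧
    -- and `H^•(A,M)` is a finitely generated `H^•(A,k)`-module for every
    -- finite-dimensional `ℤ/2`-graded `A`-module `M`
    (∀ (M : Type) [AddCommGroup M] [Module A M] [Module k M] [IsScalarTower k A M]
        [FiniteDimensional k M] (ℳ : ZMod 2 → Submodule k M) [DirectSum.Decomposition ℳ],
      (∀ (i j : ZMod 2), ∀ a ∈ 𝒜 i, ∀ x ∈ ℳ j, a • x ∈ ℳ (i + j)) →
      ∃ T : Finset (Σ N : ℕ, Ext (trivCat k A counit) (ModuleCat.of A M) N),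
        ∀ (N : ℕ) (x : Ext (trivCat k A counit) (ModuleCat.of A M) N),
          ExtModGen (k := k) (trivCat k A counit) (ModuleCat.of A M)
            (fun N' => {y | (⟨N', y⟩ : Σ N'' : ℕ, Ext (trivCat k A counit)
              (ModuleCat.of A M) N'') ∈ T}) N x) := by
  obtain ⟨algGen, modGen⟩ := statement1_general k A 𝒜 comul counit antipode hHopf
  exact ⟨algGen, fun M _ _ _ _ _ _ _ _ => modGen M⟩

end Stmt1
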